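/- Let r ≥ 2, let 1 ≤ n₁ ≤ n₂ ≤ ⋯ ≤ n_r be integers, set n = n₁ + ⋯ + n_r, and let s ≥ 0. For a generic configuration in ℙⁿ(ℂ) of s points P₁,…,P_s and r linear subspaces Λ₁,…,Λ_r of dimensions n₁−1,…,n_r−1 respectively, there exists a rational normal curve passing through P₁,…,P_s and meeting each Λᵢ in exactly nᵢ distinct points if and only if either (s ≤ n₁ + 3 and 1 < n₁ < n₂) or (s ≤ n₂ + 2 and (n₁ = 1 or n₁ = n₂)). -/

import Mathlib

noncomputable section

/-- Projective space `ℙⁿ(ℂ)`, the projectivization of `ℂ^{n+1}`. -/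
abbrev PP (k : ℕ) := Projectivization ℂ (Fin (k + 1) → ℂ)

/-- The vector of the monomials `s^k t^(n-k)`, used to parametrize rational normal curves. -/
def veron (n : ℕ) (v : Fin 2 → ℂ) : Fin (n + 1) → ℂ :=
  fun k => v 0 ^ (k : ℕ) * v 1 ^ (n - (k : ℕ))

/-- `C ⊆ ℙⁿ` is a rational normal curve if it is the image of `[s:t] ↦ [F₀(s,t):⋯:Fₙ(s,t)]`
for a basis `F₀,…,Fₙ` of the degree-`n` binary forms; such a basis is encoded by an
invertible matrix of coefficients applied to the monomial vector `veron`. -/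
def IsRNC (n : ℕ) (C : Set (PP n)) : Prop :=
  ∃ M : Matrix (Fin (n + 1)) (Fin (n + 1)) ℂ, IsUnit M.det ∧
    C = {P : PP n | ∃ v : Fin 2 → ℂ, v ≠ 0 ∧ ∃ c : ℂ, c ≠ 0 ∧
      P.rep = c • M.mulVec (veron n v)}

/-- The linear subspace of `ℙⁿ` given as the projectivization of the column span of a matrix. -/
def projSet {n m : ℕ} (A : Matrix (Fin (n + 1)) (Fin m) ℂ) : Set (PP n) :=
  {P : PP n | P.rep ∈ Submodule.span ℂ (Set.range fun j => fun r => A r j)}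

/-- A property `Q` of configurations of `s` points (rank-one `(n+1)×1` matrices) and `r`
linear subspaces of dimensions `nv j - 1` (rank-`(nv j)` matrices of size `(n+1)×(nv j)`)
holds generically: there is a nonzero polynomial in the matrix entries such that `Q`
holds at every full-rank tuple where the polynomial does not vanish. -/
def GenHoldsPtsSpaces (n s r : ℕ) (nv : Fin r → ℕ)
    (Q : (Fin s → Matrix (Fin (n + 1)) (Fin 1) ℂ) →
         ((j : Fin r) → Matrix (Fin (n + 1)) (Fin (nv j)) ℂ) → Prop) : Prop :=
  ∃ F : MvPolynomial
      ((Fin s × Fin (n + 1) × Fin 1) ⊕ ((j : Fin r) × (Fin (n + 1) × Fin (nv j)))) ℂ,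
    F ≠ 0 ∧ ∀ P B, (∀ i, (P i).rank = 1) → (∀ j, (B j).rank = nv j) →
      MvPolynomial.eval
        (Sum.elim (fun q => P q.1 q.2.1 q.2.2) (fun q => B q.1 q.2.1 q.2.2)) F ≠ 0 →
      Q P B

/-!
Projecting from the span of the subspaces `Λᵢ`, `i ≠ j`, lowers the degree of a rational normal
curve meeting each `Λᵢ` in `nᵢ` points to `nⱼ`: the projection to `ℙ^(nⱼ)` is a curve of degree
`nⱼ` through the projections of the points, and all `r` projections share the parameters in `ℙ¹`
of the points. Conversely, curves of degree `nⱼ` in the `ℙ^(nⱼ)` that interpolate the projected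
points at common parameters glue to a curve in `ℙⁿ`. So everything depends on the parameters at
which generic points of `ℙᵐ` are interpolated in degree `m`: for `m + 2` points they are arbitrary,
for `m + 3` points they are determined up to `PGL₂`, and `m + 4` points are not interpolated at all
unless `m = 1`. Two projections that both determine the parameters impose different cross ratios.
Where the counts allow a curve, the remaining nondegeneracy conditions are nonzero polynomial
conditions, verified at explicit curves.
-/

section Generic

open Filter Polynomial

variable {σ τ κ K : Type*} [CommRing K]

/-- The algebra of polynomial functions on the affine space `σ → K`. -/
def polyFun (σ K : Type*) [CommRing K] : Subalgebra K ((σ → K) → K) :=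
  (MvPolynomial.aeval fun i x => x i).range

lemma mem_polyFun {f : (σ → K) → K} :
    f ∈ polyFun σ K ↔ ∃ p : MvPolynomial σ K, ∀ x, MvPolynomial.eval x p = f x := by
  have aeval_apply (p : MvPolynomial σ K) (x : σ → K) :
      MvPolynomial.aeval (fun i (y : σ → K) => y i) p x = MvPolynomial.eval x p := by
    induction p using MvPolynomial.induction_on with
    | C a => simp
    | add p q hp hq => simp [hp, hq]
    | mul_X p i hp => simp [hp]
  simp only [polyFun, AlgHom.mem_range, funext_iff, aeval_apply]

namespace polyFun

lemma const_mem (c : K) : (fun _ => c) ∈ polyFun σ K := (polyFun σ K).algebraMap_mem c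

lemma coord_mem (i : σ) : (fun x => x i) ∈ polyFun σ K := ⟨.X i, MvPolynomial.aeval_X _ i⟩

lemma sum_mem {s : Finset κ} {f : κ → (σ → K) → K} (hf : ∀ k ∈ s, f k ∈ polyFun σ K) :
    (fun x => ∑ k ∈ s, f k x) ∈ polyFun σ K := by
  simpa only [Finset.sum_fn] using Subalgebra.sum_mem _ hf

lemma prod_mem {s : Finset κ} {f : κ → (σ → K) → K} (hf : ∀ k ∈ s, f k ∈ polyFun σ K) :
    (fun x => ∏ k ∈ s, f k x) ∈ polyFun σ K := by
  simpa only [Finset.prod_fn] using Subalgebra.prod_mem _ hf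

lemma ite_mem (p : Prop) [Decidable p] {f g : (σ → K) → K} (hf : f ∈ polyFun σ K)
    (hg : g ∈ polyFun σ K) : (fun x => if p then f x else g x) ∈ polyFun σ K := by
  split_ifs <;> assumption

lemma comp_mem {f : (τ → K) → K} (hf : f ∈ polyFun τ K) {φ : (σ → K) → τ → K}
    (hφ : ∀ i, (fun x => φ x i) ∈ polyFun σ K) : (fun x => f (φ x)) ∈ polyFun σ K := by
  obtain ⟨p, hp⟩ := mem_polyFun.1 hf
  simp_rw [← hp]
  induction p using MvPolynomial.induction_on generalizing f with
  | C a => simpa only [MvPolynomial.eval_C] using const_mem a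
  | add p q ihp ihq =>
    simp only [map_add]
    exact add_mem (ihp (mem_polyFun.2 ⟨p, fun _ => rfl⟩) fun _ => rfl)
      (ihq (mem_polyFun.2 ⟨q, fun _ => rfl⟩) fun _ => rfl)
  | mul_X p i ih =>
    simp only [map_mul, MvPolynomial.eval_X]
    exact mul_mem (ih (mem_polyFun.2 ⟨p, fun _ => rfl⟩) fun _ => rfl) (hφ i)

section Matrix

variable [Fintype κ] [DecidableEq κ] {A : (σ → K) → Matrix κ κ K}

lemma det_mem (hA : ∀ i j, (fun x => A x i j) ∈ polyFun σ K) :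
    (fun x => (A x).det) ∈ polyFun σ K := by
  simp only [Matrix.det_apply']
  exact sum_mem fun π _ => mul_mem (const_mem _) (prod_mem fun i _ => hA _ _)

lemma cramer_mem {b : (σ → K) → κ → K} (hA : ∀ i j, (fun x => A x i j) ∈ polyFun σ K)
    (hb : ∀ i, (fun x => b x i) ∈ polyFun σ K) (k : κ) :
    (fun x => (A x).cramer (b x) k) ∈ polyFun σ K := by
  simp only [Matrix.cramer_apply]
  refine det_mem fun i j => ?_
  simp only [Matrix.updateCol_apply]
  exact ite_mem _ (hb i) (hA i j)

lemma adjugate_mem (hA : ∀ i j, (fun x => A x i j) ∈ polyFun σ K) (k l : κ) :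
    (fun x => (A x).adjugate k l) ∈ polyFun σ K := by
  simp only [Matrix.adjugate_apply]
  refine det_mem fun i j => ?_
  simp only [Matrix.updateRow_apply]
  exact ite_mem _ (const_mem _) (hA i j)

end Matrix

end polyFun

/-- The algebra of families of univariate polynomials whose coefficients are polynomial functions
of the parameter. -/
def polyFamily (σ K : Type*) [CommRing K] : Subalgebra K[X] ((σ → K) → K[X]) where
  carrier := {f | ∀ k, (fun x => (f x).coeff k) ∈ polyFun σ K}
  mul_mem' hf hg k := by
    simp only [Pi.mul_apply, coeff_mul]
    exact polyFun.sum_mem fun a _ => mul_mem (hf _) (hg _)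
  add_mem' hf hg k := by
    simp only [Pi.add_apply, coeff_add]
    exact add_mem (hf k) (hg k)
  algebraMap_mem' p k := polyFun.const_mem _

namespace polyFamily

lemma const_mem (p : K[X]) : (fun _ => p) ∈ polyFamily σ K := (polyFamily σ K).algebraMap_mem p

lemma C_mem {f : (σ → K) → K} (hf : f ∈ polyFun σ K) : (fun x => C (f x)) ∈ polyFamily σ K := by
  intro k
  simp only [coeff_C]
  exact polyFun.ite_mem _ hf (polyFun.const_mem 0)

lemma sum_mem {s : Finset κ} {f : κ → (σ → K) → K[X]} (hf : ∀ k ∈ s, f k ∈ polyFamily σ K) :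
    (fun x => ∑ k ∈ s, f k x) ∈ polyFamily σ K := by
  simpa only [Finset.sum_fn] using Subalgebra.sum_mem _ hf

lemma prod_mem {s : Finset κ} {f : κ → (σ → K) → K[X]} (hf : ∀ k ∈ s, f k ∈ polyFamily σ K) :
    (fun x => ∏ k ∈ s, f k x) ∈ polyFamily σ K := by
  simpa only [Finset.prod_fn] using Subalgebra.prod_mem _ hf

lemma resultant_mem {f g : (σ → K) → K[X]} (hf : f ∈ polyFamily σ K) (hg : g ∈ polyFamily σ K)
    (m n : ℕ) : (fun x => (f x).resultant (g x) m n) ∈ polyFun σ K := by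
  refine polyFun.det_mem fun i j => ?_
  simp only [sylvester, Matrix.of_apply]
  refine Fin.addCases (fun j => ?_) (fun j => ?_) j
  · simp only [Fin.addCases_left]
    exact polyFun.ite_mem _ (hg _) (polyFun.const_mem 0)
  · simp only [Fin.addCases_right]
    exact polyFun.ite_mem _ (hf _) (polyFun.const_mem 0)

lemma derivative_mem {f : (σ → K) → K[X]} (hf : f ∈ polyFamily σ K) :
    (fun x => derivative (f x)) ∈ polyFamily σ K := by
  intro k
  simp only [coeff_derivative]
  exact mul_mem (hf _) (polyFun.const_mem _)

end polyFamily

section Filter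

variable [IsDomain K]

/-- The filter of generic sets: those containing the nonvanishing locus of a nonzero polynomial. -/
def genericFilter (σ K : Type*) [CommRing K] [IsDomain K] : Filter (σ → K) where
  sets := {S | ∃ p : MvPolynomial σ K, p ≠ 0 ∧ ∀ x, MvPolynomial.eval x p ≠ 0 → x ∈ S}
  univ_sets := ⟨1, one_ne_zero, fun _ _ => trivial⟩
  sets_of_superset := fun ⟨p, hp, h⟩ hST => ⟨p, hp, fun x hx => hST (h x hx)⟩
  inter_sets := fun ⟨p, hp, h⟩ ⟨q, hq, h'⟩ => ⟨p * q, mul_ne_zero hp hq, fun x hx => by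
    rw [map_mul] at hx
    exact ⟨h x (left_ne_zero_of_mul hx), h' x (right_ne_zero_of_mul hx)⟩⟩

namespace genericFilter

lemma eventually_iff {Q : (σ → K) → Prop} : (∀ᶠ x in genericFilter σ K, Q x) ↔
    ∃ p : MvPolynomial σ K, p ≠ 0 ∧ ∀ x, MvPolynomial.eval x p ≠ 0 → Q x := Iff.rfl

instance [Infinite K] : (genericFilter σ K).NeBot := by
  refine ⟨fun h => ?_⟩
  obtain ⟨p, hp, hp'⟩ := eventually_iff.1 (h ▸ eventually_bot : ∀ᶠ _ in genericFilter σ K, False)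
  exact hp (MvPolynomial.funext fun x => by simpa using hp' x)

lemma eventually_ne_zero {f : (σ → K) → K} (hf : f ∈ polyFun σ K) {x₀ : σ → K} (h : f x₀ ≠ 0) :
    ∀ᶠ x in genericFilter σ K, f x ≠ 0 := by
  obtain ⟨p, hp⟩ := mem_polyFun.1 hf
  refine eventually_iff.2 ⟨p, ?_, fun x hx => by rwa [← hp]⟩
  rintro rfl
  exact h (by rw [← hp, map_zero])

lemma tendsto_of_surjective [Infinite K] {φ : (σ → K) → τ → K}
    (hφ : ∀ i, (fun x => φ x i) ∈ polyFun σ K) (hs : Function.Surjective φ) :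
    Tendsto φ (genericFilter σ K) (genericFilter τ K) := by
  rintro S ⟨p, hp, hS⟩
  obtain ⟨y, hy⟩ : ∃ y, MvPolynomial.eval y p ≠ 0 := by
    by_contra! h
    exact hp (MvPolynomial.funext fun y => by rw [h, map_zero])
  obtain ⟨x₀, rfl⟩ := hs y
  have hmem := polyFun.comp_mem (mem_polyFun.2 ⟨p, fun _ => rfl⟩) hφ
  exact (eventually_ne_zero hmem hy).mono fun x => hS (φ x)

lemma eventually_of_comp {f : τ → σ} (hf : f.Injective) [Infinite K] {Q : (τ → K) → Prop}
    (h : ∀ᶠ x in genericFilter σ K, Q (x ∘ f)) : ∀ᶠ y in genericFilter τ K, Q y := by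
  obtain ⟨p, hp, hQ⟩ := eventually_iff.1 h
  obtain ⟨x₀, hx₀⟩ : ∃ x, MvPolynomial.eval x p ≠ 0 := by
    by_contra! h
    exact hp (MvPolynomial.funext fun x => by rw [h, map_zero])
  have hmem : (fun y => MvPolynomial.eval (Function.extend f y x₀) p) ∈ polyFun τ K := by
    refine polyFun.comp_mem (mem_polyFun.2 ⟨p, fun _ => rfl⟩) fun i => ?_
    by_cases hi : ∃ j, f j = i
    · obtain ⟨j, rfl⟩ := hi
      simpa only [hf.extend_apply] using polyFun.coord_mem j
    · simpa only [Function.extend_apply' _ _ _ hi] using polyFun.const_mem _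
  have hext : Function.extend f (x₀ ∘ f) x₀ = x₀ := by
    funext i
    by_cases hi : ∃ j, f j = i
    · obtain ⟨j, rfl⟩ := hi
      exact hf.extend_apply _ _ j
    · exact Function.extend_apply' _ _ i hi
  refine (eventually_ne_zero hmem (x₀ := x₀ ∘ f) (by rwa [hext])).mono fun y hy => ?_
  simpa only [Function.extend_comp hf] using hQ _ hy

lemma eventually_separable {K : Type*} [Field K] [CharZero K] {f : (σ → K) → K[X]} {n : ℕ}
    (hf : f ∈ polyFamily σ K) (hdeg : ∀ x, (f x).natDegree ≤ n) {x₀ : σ → K}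
    (hdeg₀ : (f x₀).natDegree = n) (hsep : (f x₀).Separable) :
    ∀ᶠ x in genericFilter σ K, (f x).natDegree = n ∧ (f x).Separable := by
  have hlead : ∀ᶠ x in genericFilter σ K, (f x).coeff n ≠ 0 :=
    eventually_ne_zero (hf n) (x₀ := x₀) (by
      rw [← hdeg₀, coeff_natDegree, leadingCoeff_ne_zero]
      exact hsep.ne_zero)
  have hres : ∀ᶠ x in genericFilter σ K, (f x).resultant (derivative (f x)) n (n - 1) ≠ 0 := by
    refine eventually_ne_zero (polyFamily.resultant_mem hf (polyFamily.derivative_mem hf) _ _)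
      (x₀ := x₀) ?_
    rw [← hdeg₀, ← natDegree_derivative, Ne, resultant_eq_zero_iff]
    exact fun h => h.2 hsep
  filter_upwards [hlead, hres] with x hx hx'
  have hn : (f x).natDegree = n := (hdeg x).antisymm (le_natDegree_of_ne_zero hx)
  refine ⟨hn, by_contra fun hs => hx' ?_⟩
  rw [← hn, ← natDegree_derivative, resultant_eq_zero_iff]
  exact ⟨Or.inl fun h => hx (by rw [h, coeff_zero]), hs⟩

end genericFilter

end Filter

end Generic

section BinaryForms

open Finset Matrix

variable {κ : Type*} {d e n : ℕ}

/-- The determinant of two plane vectors, which vanishes iff they represent the same point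
of `ℙ¹` or one of them is zero. -/
def bracket (a b : Fin 2 → ℂ) : ℂ := a 0 * b 1 - a 1 * b 0

lemma bracket_swap (a b : Fin 2 → ℂ) : bracket a b = -bracket b a := by
  simp only [bracket]; ring

lemma bracket_self (a : Fin 2 → ℂ) : bracket a a = 0 := by
  simp only [bracket]; ring

lemma exists_bracket_ne_zero {v : Fin 2 → ℂ} (hv : v ≠ 0) : ∃ b, bracket v b ≠ 0 := by
  by_contra! h
  refine hv (funext fun i => ?_)
  fin_cases i
  · simpa [bracket] using h ![0, 1]
  · simpa [bracket] using h ![1, 0]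

lemma exists_forall_bracket_ne_zero [Finite κ] {w : κ → Fin 2 → ℂ} (hw : ∀ k, w k ≠ 0) :
    ∃ v, ∀ k, bracket v (w k) ≠ 0 := by
  refine (Filter.eventually_all.2 fun k => ?_ :
    ∀ᶠ v in genericFilter (Fin 2) ℂ, ∀ k, bracket v (w k) ≠ 0).exists
  obtain ⟨b, hb⟩ := exists_bracket_ne_zero (hw k)
  exact genericFilter.eventually_ne_zero (f := fun v => bracket v (w k))
    (sub_mem (mul_mem (polyFun.coord_mem 0) (polyFun.const_mem _))
      (mul_mem (polyFun.coord_mem 1) (polyFun.const_mem _)))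
    (x₀ := b) (by rwa [bracket_swap, neg_ne_zero])

lemma bracket_eq_zero_iff {a b : Fin 2 → ℂ} (ha : a ≠ 0) (hb : b ≠ 0) :
    bracket a b = 0 ↔ ∃ c : ℂ, c ≠ 0 ∧ a = c • b := by
  refine ⟨fun h => ?_, fun ⟨c, _, h⟩ => by simp [h, bracket]; ring⟩
  obtain ⟨u, hu⟩ := exists_bracket_ne_zero hb
  have hab : a = (bracket a u / bracket b u) • b := by
    funext i
    rw [Pi.smul_apply, smul_eq_mul, div_mul_eq_mul_div, eq_div_iff hu]
    simp only [bracket] at h ⊢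
    fin_cases i
    · simp only [Fin.zero_eta]
      linear_combination (-u 0) * h
    · simp only [Fin.mk_one]
      linear_combination (-u 1) * h
  refine ⟨_, fun h0 => ha ?_, hab⟩
  rw [hab, h0, zero_smul]

/-- The space of binary forms of degree `d`, as functions on the plane. -/
def binaryForm (d : ℕ) : Submodule ℂ ((Fin 2 → ℂ) → ℂ) :=
  Submodule.span ℂ (Set.range fun k v => veron d v k)

lemma mem_binaryForm {f : (Fin 2 → ℂ) → ℂ} :
    f ∈ binaryForm d ↔ ∃ a : Fin (d + 1) → ℂ, ∀ v, f v = a ⬝ᵥ veron d v := by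
  rw [binaryForm, Submodule.mem_span_range_iff_exists_fun]
  refine exists_congr fun a => ?_
  simp [funext_iff, dotProduct, eq_comm]

lemma veron_smul (n : ℕ) (a : ℂ) (v : Fin 2 → ℂ) : veron n (a • v) = a ^ n • veron n v := by
  funext k
  have hpow : a ^ n = a ^ (k : ℕ) * a ^ (n - (k : ℕ)) := by
    rw [← pow_add, Nat.add_sub_cancel' (Nat.lt_succ_iff.1 k.2)]
  simp only [veron, Pi.smul_apply, smul_eq_mul, mul_pow, hpow]
  ring

namespace binaryForm

lemma apply_smul {f : (Fin 2 → ℂ) → ℂ} (hf : f ∈ binaryForm d) (c : ℂ) (v : Fin 2 → ℂ) :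
    f (c • v) = c ^ d * f v := by
  obtain ⟨a, ha⟩ := mem_binaryForm.1 hf
  rw [ha, ha, veron_smul, dotProduct_smul, smul_eq_mul]

lemma bracket_mem (b : Fin 2 → ℂ) : (fun v => bracket v b) ∈ binaryForm 1 :=
  mem_binaryForm.2 ⟨![-b 0, b 1], fun v => by simp [bracket, veron, dotProduct]; ring⟩

lemma one_mem : (fun _ => 1) ∈ binaryForm 0 :=
  mem_binaryForm.2 ⟨1, fun v => by simp [veron, dotProduct]⟩

lemma mul_mem {f g : (Fin 2 → ℂ) → ℂ} (hf : f ∈ binaryForm d) (hg : g ∈ binaryForm e) :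
    (fun v => f v * g v) ∈ binaryForm (d + e) := by
  suffices h : binaryForm d * binaryForm e ≤ binaryForm (d + e) from
    h (Submodule.mul_mem_mul hf hg)
  rw [binaryForm, binaryForm, Submodule.span_mul_span, Submodule.span_le]
  rintro _ ⟨_, ⟨k, rfl⟩, _, ⟨l, rfl⟩, rfl⟩
  refine Submodule.subset_span ⟨⟨k + l, by omega⟩, funext fun v => ?_⟩
  have hsub : d + e - (k + l : ℕ) = (d - k) + (e - l) := by omega
  simp only [veron, Pi.mul_apply, hsub, pow_add]
  ring

lemma const_mul_mem {f : (Fin 2 → ℂ) → ℂ} (hf : f ∈ binaryForm d) (c : ℂ) :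
    (fun v => c * f v) ∈ binaryForm d :=
  (binaryForm d).smul_mem c hf

lemma sum_mem {s : Finset κ} {f : κ → (Fin 2 → ℂ) → ℂ} (hf : ∀ k ∈ s, f k ∈ binaryForm d) :
    (fun v => ∑ k ∈ s, f k v) ∈ binaryForm d := by
  simpa only [Finset.sum_fn] using Submodule.sum_mem _ hf

lemma prod_mem {s : Finset κ} {d : κ → ℕ} {f : κ → (Fin 2 → ℂ) → ℂ}
    (hf : ∀ k ∈ s, f k ∈ binaryForm (d k)) :
    (fun v => ∏ k ∈ s, f k v) ∈ binaryForm (∑ k ∈ s, d k) := by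
  classical
  induction s using Finset.induction_on with
  | empty => simpa using one_mem
  | insert a s ha ih =>
    simp only [prod_insert ha, sum_insert ha]
    exact mul_mem (hf a (mem_insert_self a s)) (ih fun k hk => hf k (mem_insert_of_mem hk))

lemma prod_bracket_mem (s : Finset κ) (z : κ → Fin 2 → ℂ) :
    (fun v => ∏ k ∈ s, bracket v (z k)) ∈ binaryForm s.card := by
  simpa using prod_mem (s := s) (d := fun _ => 1) fun k _ => bracket_mem (z k)

section Nodes

variable [Fintype κ] {z : κ → Fin 2 → ℂ} (hz : Pairwise fun i j => bracket (z i) (z j) ≠ 0)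
include hz

lemma eq_zero_of_nodes (hc : Fintype.card κ = d + 1) {f : (Fin 2 → ℂ) → ℂ} (hf : f ∈ binaryForm d)
    (h0 : ∀ i, f (z i) = 0) : f = 0 := by
  obtain ⟨a, ha⟩ := mem_binaryForm.1 hf
  let e := (Fintype.equivFinOfCardEq hc).symm
  have hdet : (projVandermonde (fun i => z (e i) 0) (fun i => z (e i) 1)).det ≠ 0 := by
    rw [det_projVandermonde]
    refine prod_ne_zero_iff.2 fun i _ => prod_ne_zero_iff.2 fun j hj => ?_
    have hij : bracket (z (e j)) (z (e i)) ≠ 0 := hz (e.injective.ne (mem_Ioi.1 hj).ne')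
    simpa only [bracket, mul_comm] using hij
  have ha0 : a = 0 := by
    refine eq_zero_of_mulVec_eq_zero hdet (funext fun i => ?_)
    have hrow : projVandermonde (fun i => z (e i) 0) (fun i => z (e i) 1) i = veron d (z (e i)) :=
      funext fun k => by
        rw [projVandermonde_apply, veron, Fin.val_rev, Nat.add_sub_add_right]
    rw [mulVec, hrow, dotProduct_comm, ← ha, h0, Pi.zero_apply]
  exact funext fun v => by rw [ha, ha0, zero_dotProduct, Pi.zero_apply]

variable [DecidableEq κ]

lemma prod_erase_bracket_ne_zero (k : κ) : ∏ l ∈ univ.erase k, bracket (z k) (z l) ≠ 0 :=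
  prod_ne_zero_iff.2 fun _ hl => hz (ne_of_mem_erase hl).symm

lemma lagrange (hc : Fintype.card κ = d + 1) {f : (Fin 2 → ℂ) → ℂ} (hf : f ∈ binaryForm d)
    (v : Fin 2 → ℂ) : f v = ∑ k, f (z k) / (∏ l ∈ univ.erase k, bracket (z k) (z l)) *
      ∏ l ∈ univ.erase k, bracket v (z l) := by
  have hbasis (k : κ) : (fun v => ∏ l ∈ univ.erase k, bracket v (z l)) ∈ binaryForm d := by
    simpa [card_erase_of_mem, hc] using prod_bracket_mem (univ.erase k) z
  refine sub_eq_zero.1 (congrFun (eq_zero_of_nodes hz hc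
    (sub_mem hf (sum_mem fun k _ => const_mul_mem (hbasis k) _)) fun i => ?_) v)
  simp only [Pi.sub_apply]
  rw [Finset.sum_eq_single i, div_mul_cancel₀ _ (prod_erase_bracket_ne_zero hz i), sub_self]
  · intro k _ hk
    exact mul_eq_zero_of_right _ (prod_eq_zero (mem_erase.2 ⟨hk.symm, mem_univ i⟩) (bracket_self _))
  · simp

end Nodes

lemma exists_eq_bracket_mul {f : (Fin 2 → ℂ) → ℂ} (hf : f ∈ binaryForm (d + 1)) {w : Fin 2 → ℂ}
    (hw : w ≠ 0) (h0 : f w = 0) : ∃ g ∈ binaryForm d, ∀ v, f v = bracket v w * g v := by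
  obtain ⟨b, hb⟩ := exists_bracket_ne_zero hw
  let z : Option (Fin (d + 1)) → Fin 2 → ℂ := fun o => o.elim w fun k => b + (k : ℂ) • w
  have hzw (k : Fin (d + 1)) : bracket (b + (k : ℂ) • w) w = -bracket w b := by
    simp [bracket]; ring
  have hzz (k l : Fin (d + 1)) :
      bracket (b + (k : ℂ) • w) (b + (l : ℂ) • w) = (k - l) * bracket w b := by
    simp [bracket]; ring
  have hz : Pairwise fun i j => bracket (z i) (z j) ≠ 0 := by
    rintro (_ | k) (_ | l) hkl
    · exact absurd rfl hkl
    · simpa [z, bracket_swap w, hzw] using hb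
    · simpa [z, hzw] using hb
    · have : (k : ℂ) - l ≠ 0 := by
        simpa [sub_eq_zero, Fin.val_inj] using hkl
      simpa [z, hzz] using ⟨this, hb⟩
  refine ⟨fun v => ∑ k, f (z (some k)) / (∏ l ∈ univ.erase (some k), bracket (z (some k)) (z l)) *
    ∏ l ∈ univ.erase k, bracket v (z (some l)), sum_mem fun k _ => const_mul_mem ?_ _, fun v => ?_⟩
  · simpa using prod_bracket_mem (univ.erase k) fun l => z (some l)
  · have herase (k : Fin (d + 1)) :
        univ.erase (some k) = insert none ((univ.erase k).map Function.Embedding.some) := by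
      ext (_ | l) <;> simp
    rw [lagrange hz (by simp) hf v, Fintype.sum_option, mul_sum]
    simp only [z, Option.elim_none, h0, zero_div, zero_mul, zero_add]
    refine sum_congr rfl fun k _ => ?_
    rw [herase, prod_insert (by simp), prod_insert (by simp), prod_map, prod_map]
    simp only [Function.Embedding.some_apply, Option.elim_some, Option.elim_none]
    ring

lemma exists_eq_prod_bracket_mul {W : κ → Fin 2 → ℂ} {s : Finset κ} (hW : ∀ k ∈ s, W k ≠ 0)
    (hWW : (s : Set κ).Pairwise fun k l => bracket (W k) (W l) ≠ 0) {f : (Fin 2 → ℂ) → ℂ}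
    (hf : f ∈ binaryForm (s.card + d)) (h0 : ∀ k ∈ s, f (W k) = 0) :
    ∃ g ∈ binaryForm d, ∀ v, f v = (∏ k ∈ s, bracket v (W k)) * g v := by
  classical
  induction s using Finset.induction_on generalizing f with
  | empty => exact ⟨f, by simpa using hf, by simp⟩
  | insert a s ha ih =>
    have hdeg : (insert a s).card + d = s.card + d + 1 := by rw [card_insert_of_notMem ha]; ring
    obtain ⟨g, hg, hfg⟩ := exists_eq_bracket_mul (hdeg ▸ hf) (hW a (mem_insert_self a s))
      (h0 a (mem_insert_self a s))
    have hg0 : ∀ k ∈ s, g (W k) = 0 := fun k hk => by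
      have hka : bracket (W k) (W a) ≠ 0 := hWW (mem_insert_of_mem hk) (mem_insert_self a s)
        (ne_of_mem_of_not_mem hk ha)
      simpa [hfg, hka] using h0 k (mem_insert_of_mem hk)
    obtain ⟨h, hh, hgh⟩ := ih (fun k hk => hW k (mem_insert_of_mem hk))
      (hWW.mono fun _ => mem_insert_of_mem) hg hg0
    exact ⟨h, hh, fun v => by rw [hfg, hgh, prod_insert ha, mul_assoc]⟩

lemma exists_eq_const_mul_prod_bracket [Fintype κ] {W : κ → Fin 2 → ℂ} (hW : ∀ k, W k ≠ 0)
    (hWW : Pairwise fun k l => bracket (W k) (W l) ≠ 0) {f : (Fin 2 → ℂ) → ℂ}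
    (hf : f ∈ binaryForm (Fintype.card κ)) (h0 : ∀ k, f (W k) = 0) :
    ∃ c : ℂ, ∀ v, f v = c * ∏ k, bracket v (W k) := by
  obtain ⟨g, hg, hfg⟩ := exists_eq_prod_bracket_mul (s := univ) (d := 0)
    (fun k _ => hW k) (hWW.set_pairwise _) hf fun k _ => h0 k
  obtain ⟨a, ha⟩ := mem_binaryForm.1 hg
  exact ⟨a 0, fun v => by rw [hfg, ha, mul_comm]; simp [dotProduct, veron]⟩

lemma apply_ne_zero [Fintype κ] {W : κ → Fin 2 → ℂ} (hW : ∀ k, W k ≠ 0)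
    (hWW : Pairwise fun k l => bracket (W k) (W l) ≠ 0) {f : (Fin 2 → ℂ) → ℂ}
    (hf : f ∈ binaryForm (Fintype.card κ)) (h0 : ∀ k, f (W k) = 0) (hf0 : f ≠ 0)
    {v : Fin 2 → ℂ} (hv : ∀ k, bracket v (W k) ≠ 0) : f v ≠ 0 := by
  obtain ⟨c, hc⟩ := exists_eq_const_mul_prod_bracket hW hWW hf h0
  have hc0 : c ≠ 0 := fun h => hf0 (funext fun v => by rw [hc, h, zero_mul, Pi.zero_apply])
  rw [hc]
  exact mul_ne_zero hc0 (prod_ne_zero_iff.2 fun k _ => hv k)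

lemma exists_eq_smul [Fintype κ] {W : κ → Fin 2 → ℂ} (hW : ∀ k, W k ≠ 0)
    (hWW : Pairwise fun k l => bracket (W k) (W l) ≠ 0) {f h : (Fin 2 → ℂ) → ℂ}
    (hf : f ∈ binaryForm (Fintype.card κ)) (hf0 : ∀ k, f (W k) = 0)
    (hh : h ∈ binaryForm (Fintype.card κ)) (hh0 : ∀ k, h (W k) = 0) (hne : h ≠ 0) :
    ∃ b : ℂ, f = b • h := by
  obtain ⟨a, ha⟩ := exists_eq_const_mul_prod_bracket hW hWW hf hf0
  obtain ⟨c, hc⟩ := exists_eq_const_mul_prod_bracket hW hWW hh hh0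
  have hc0 : c ≠ 0 := fun h => hne (funext fun v => by rw [hc, h, zero_mul, Pi.zero_apply])
  refine ⟨a / c, funext fun v => ?_⟩
  rw [Pi.smul_apply, smul_eq_mul, ha, hc, ← mul_assoc, div_mul_cancel₀ a hc0]

end binaryForm

lemma veron_linearIndependent {m : ℕ} (hm : m ≤ n + 1) {z : Fin m → Fin 2 → ℂ} (h0 : ∀ i, z i ≠ 0)
    (hz : Pairwise fun i j => bracket (z i) (z j) ≠ 0) :
    LinearIndependent ℂ fun i => veron n (z i) := by
  rw [Fintype.linearIndependent_iff]
  intro g hg i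
  obtain ⟨b, hb⟩ := exists_bracket_ne_zero (h0 i)
  have hcard : (univ.erase i).card + (univ : Finset (Fin (n + 1 - m))).card = n := by
    simp only [card_erase_of_mem (mem_univ i), card_univ, Fintype.card_fin]
    have := i.2
    omega
  obtain ⟨a, ha⟩ := mem_binaryForm.1 (hcard ▸ binaryForm.mul_mem
    (binaryForm.prod_bracket_mem (univ.erase i) z)
    (binaryForm.prod_bracket_mem univ fun _ : Fin (n + 1 - m) => b))
  have hsum : ∑ j, g j * (a ⬝ᵥ veron n (z j)) = 0 := by
    simpa [dotProduct_sum] using congrArg (a ⬝ᵥ ·) hg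
  rw [Finset.sum_eq_single i] at hsum
  · refine (mul_eq_zero.1 hsum).resolve_right ?_
    rw [← ha]
    exact mul_ne_zero (binaryForm.prod_erase_bracket_ne_zero hz i)
      (prod_ne_zero_iff.2 fun _ _ => hb)
  · intro j _ hj
    rw [← ha, prod_eq_zero (mem_erase.2 ⟨hj, mem_univ j⟩) (bracket_self _), zero_mul, mul_zero]
  · simp

lemma veron_ne_zero {v : Fin 2 → ℂ} (hv : v ≠ 0) : veron n v ≠ 0 :=
  (veron_linearIndependent (m := 1) (n := n) (by omega) (fun _ => hv)
    Subsingleton.pairwise).ne_zero 0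

end BinaryForms

section CurveGeometry

open Matrix

variable {n m : ℕ} {M : Matrix (Fin (n + 1)) (Fin (n + 1)) ℂ}

/-- The rational curve in `ℙⁿ` parametrized by the forms with coefficient matrix `M`. -/
def ratCurve (M : Matrix (Fin (n + 1)) (Fin (n + 1)) ℂ) : Set (PP n) :=
  {P | ∃ v : Fin 2 → ℂ, v ≠ 0 ∧ ∃ c : ℂ, c ≠ 0 ∧ P.rep = c • M *ᵥ veron n v}

lemma mk_mem_ratCurve_iff {y : Fin (n + 1) → ℂ} (hy : y ≠ 0) :
    Projectivization.mk ℂ y hy ∈ ratCurve M ↔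
      ∃ v : Fin 2 → ℂ, v ≠ 0 ∧ ∃ c : ℂ, c ≠ 0 ∧ y = c • M *ᵥ veron n v := by
  obtain ⟨a, ha⟩ := Projectivization.exists_smul_eq_mk_rep ℂ y hy
  refine exists_congr fun v => and_congr_right fun _ => ?_
  rw [← ha]
  constructor
  · rintro ⟨c, hc, h⟩
    exact ⟨a⁻¹ • c, by simp [hc, Units.smul_def], by rw [smul_assoc, ← h, inv_smul_smul]⟩
  · rintro ⟨c, hc, h⟩
    exact ⟨a • c, by simp [hc, Units.smul_def], by rw [smul_assoc, ← h]⟩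

lemma mk_mem_projSet_iff {A : Matrix (Fin (n + 1)) (Fin m) ℂ} {y : Fin (n + 1) → ℂ} (hy : y ≠ 0) :
    Projectivization.mk ℂ y hy ∈ projSet A ↔ y ∈ Submodule.span ℂ (Set.range A.col) := by
  obtain ⟨a, ha⟩ := Projectivization.exists_smul_eq_mk_rep ℂ y hy
  change (Projectivization.mk ℂ y hy).rep ∈ Submodule.span ℂ (Set.range A.col) ↔ _
  rw [← ha, Units.smul_def, Submodule.smul_mem_iff _ a.ne_zero]

lemma projSet_subset_ratCurve_iff {A : Matrix (Fin (n + 1)) (Fin 1) ℂ} (hA : A.col 0 ≠ 0) :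
    projSet A ⊆ ratCurve M ↔
      ∃ v : Fin 2 → ℂ, v ≠ 0 ∧ ∃ c : ℂ, c ≠ 0 ∧ A.col 0 = c • M *ᵥ veron n v := by
  suffices h : projSet A = {Projectivization.mk ℂ (A.col 0) hA} by
    rw [h, Set.singleton_subset_iff, mk_mem_ratCurve_iff]
  refine Set.Subset.antisymm (fun P => ?_) (Set.singleton_subset_iff.2
    ((mk_mem_projSet_iff hA).2 (Submodule.subset_span ⟨0, rfl⟩)))
  induction P using Projectivization.ind with
  | h y hy =>
    rw [mk_mem_projSet_iff, Set.range_unique, Submodule.mem_span_singleton, Set.mem_singleton_iff,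
      Projectivization.mk_eq_mk_iff']
    exact id

lemma natCast_le_encard_iff {α : Type*} {S : Set α} {k : ℕ} :
    (k : ℕ∞) ≤ S.encard ↔ ∃ p : Fin k → α, p.Injective ∧ ∀ i, p i ∈ S := by
  constructor
  · intro h
    obtain ⟨t, htS, ht⟩ := Set.exists_subset_encard_eq h
    have := (Set.finite_of_encard_eq_coe ht).to_subtype
    have hcard : Nat.card t = k := by simp [Nat.card_coe_set_eq, Set.ncard_def, ht]
    let e : t ≃ Fin k := Finite.equivFinOfCardEq hcard
    exact ⟨(↑) ∘ e.symm, Subtype.val_injective.comp e.symm.injective, fun i => htS (e.symm i).2⟩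
  · rintro ⟨p, hp, hmem⟩
    have hcard := Set.encard_le_encard (Set.range_subset_iff.2 hmem)
    rwa [← Set.image_univ, hp.encard_image, Set.encard_univ, ENat.card_eq_coe_fintype_card,
      Fintype.card_fin] at hcard

section Invertible

variable (hM : IsUnit M.det)
include hM

lemma mulVec_veron_ne_zero {v : Fin 2 → ℂ} (hv : v ≠ 0) : M *ᵥ veron n v ≠ 0 := fun h =>
  veron_ne_zero hv (eq_zero_of_mulVec_eq_zero hM.ne_zero h)

lemma mulVec_veron_linearIndependent (hm : m ≤ n + 1) {z : Fin m → Fin 2 → ℂ}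
    (h0 : ∀ i, z i ≠ 0) (hz : Pairwise fun i j => bracket (z i) (z j) ≠ 0) :
    LinearIndependent ℂ fun i => M *ᵥ veron n (z i) :=
  (veron_linearIndependent hm h0 hz).map' M.mulVecLin (LinearMap.ker_eq_bot.2
    (mulVec_injective_iff_isUnit.2 ((isUnit_iff_isUnit_det M).2 hM)))

lemma mk_mulVec_veron_eq_iff (hn : n ≠ 0) {v w : Fin 2 → ℂ} (hv : v ≠ 0) (hw : w ≠ 0) :
    Projectivization.mk ℂ _ (mulVec_veron_ne_zero hM hv) =
      Projectivization.mk ℂ _ (mulVec_veron_ne_zero hM hw) ↔ bracket v w = 0 := by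
  rw [Projectivization.mk_eq_mk_iff']
  constructor
  · rintro ⟨a, h⟩
    by_contra hvw
    have hli := mulVec_veron_linearIndependent (m := 2) (z := ![v, w]) hM (by omega)
      (by simp [Fin.forall_fin_two, hv, hw])
      (by simp [Pairwise, Fin.forall_fin_two, hvw, bracket_swap w v])
    simpa using Fintype.linearIndependent_iff.1 hli ![1, -a] (by simp [h]) 0
  · intro h
    obtain ⟨c, -, rfl⟩ := (bracket_eq_zero_iff hv hw).1 h
    exact ⟨c ^ n, by rw [veron_smul, mulVec_smul]⟩

lemma exists_injective_mem_inter_iff (hn : n ≠ 0) {k : ℕ} (S : Set (PP n)) :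
    (∃ p : Fin k → PP n, p.Injective ∧ ∀ i, p i ∈ ratCurve M ∩ S) ↔
      ∃ (w : Fin k → Fin 2 → ℂ) (h0 : ∀ i, w i ≠ 0),
        (Pairwise fun i j => bracket (w i) (w j) ≠ 0) ∧
        ∀ i, Projectivization.mk ℂ _ (mulVec_veron_ne_zero hM (h0 i)) ∈ S := by
  constructor
  · rintro ⟨p, hp, hmem⟩
    choose w h0 c _ hw using fun i => (hmem i).1
    have hpw (i : Fin k) : p i = Projectivization.mk ℂ _ (mulVec_veron_ne_zero hM (h0 i)) := by
      rw [← (p i).mk_rep, Projectivization.mk_eq_mk_iff']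
      exact ⟨c i, (hw i).symm⟩
    refine ⟨w, h0, fun i j hij h => hij (hp ?_), fun i => hpw i ▸ (hmem i).2⟩
    rwa [hpw, hpw, mk_mulVec_veron_eq_iff hM hn (h0 i) (h0 j)]
  · rintro ⟨w, h0, hw, hmem⟩
    refine ⟨fun i => Projectivization.mk ℂ _ (mulVec_veron_ne_zero hM (h0 i)), fun i j hij => ?_,
      fun i => ⟨(mk_mem_ratCurve_iff _).2 ⟨w i, h0 i, 1, one_ne_zero, (one_smul ..).symm⟩, hmem i⟩⟩
    by_contra hne
    exact hw hne ((mk_mulVec_veron_eq_iff hM hn (h0 i) (h0 j)).1 hij)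

lemma ncard_inter_projSet_eq_iff (hn : n ≠ 0) (hmn : m ≤ n) (B : Matrix (Fin (n + 1)) (Fin m) ℂ) :
    (ratCurve M ∩ projSet B).ncard = m ↔ ∃ w : Fin m → Fin 2 → ℂ, (∀ k, w k ≠ 0) ∧
      (Pairwise fun k l => bracket (w k) (w l) ≠ 0) ∧
      ∀ k, M *ᵥ veron n (w k) ∈ Submodule.span ℂ (Set.range B.col) := by
  have hle : (ratCurve M ∩ projSet B).encard ≤ m := by
    by_contra! h
    obtain ⟨w, h0, hw, hmem⟩ := (exists_injective_mem_inter_iff hM hn _).1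
      (natCast_le_encard_iff.1 (ENat.natCast_add_one_le_iff.2 h))
    have hli := mulVec_veron_linearIndependent hM (Nat.succ_le_succ hmn) h0 hw
    have hspan := Submodule.finrank_mono (Submodule.span_le.2 (Set.range_subset_iff.2
      fun i => (mk_mem_projSet_iff _).1 (hmem i)))
    have hcol := finrank_range_le_card (R := ℂ) B.col
    have hfin := (finrank_span_eq_card hli).symm.trans_le (hspan.trans hcol)
    simp only [Fintype.card_fin] at hfin
    omega
  rw [← Nat.cast_inj (R := ℕ∞), (Set.finite_of_encard_le_coe hle).cast_ncard_eq, ← hle.ge_iff_eq,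
    natCast_le_encard_iff, exists_injective_mem_inter_iff hM hn]
  simp only [mk_mem_projSet_iff, exists_prop]

end Invertible

end CurveGeometry

section AdaptedCoordinates

open Matrix

lemma linearIndependent_monomials (n : ℕ) :
    LinearIndependent ℂ fun (k : Fin (n + 1)) (v : Fin 2 → ℂ) => veron n v k := by
  rw [Fintype.linearIndependent_iff]
  intro a ha
  have hV : LinearIndependent ℂ (of fun i : Fin (n + 1) => veron n ![(i : ℂ), 1]).row :=
    veron_linearIndependent le_rfl (fun i h => by simpa using congrFun h 1)
      fun i k hik => by simpa [bracket, sub_eq_zero, Fin.val_inj] using hik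
  refine congrFun (mulVec_injective_iff_isUnit.2 (linearIndependent_rows_iff_isUnit.1 hV)
    (a₂ := 0) (funext fun i => ?_))
  simpa [mulVec, dotProduct, mul_comm] using congrFun ha ![(i : ℂ), 1]

lemma linearIndependent_mulVec_veron_iff {n : ℕ} {N : Matrix (Fin (n + 1)) (Fin (n + 1)) ℂ} :
    LinearIndependent ℂ (fun a v => (N *ᵥ veron n v) a) ↔ IsUnit N.det := by
  have hrow : (fun a v => (N *ᵥ veron n v) a) =
      Fintype.linearCombination ℂ (fun (k : Fin (n + 1)) v => veron n v k) ∘ N.row := by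
    funext a v
    simp [Fintype.linearCombination_apply, mulVec, dotProduct]
  rw [hrow, LinearMap.linearIndependent_iff _ (LinearMap.ker_eq_bot.2
    (linearIndependent_monomials n).fintypeLinearCombination_injective),
    linearIndependent_rows_iff_isUnit, isUnit_iff_isUnit_det]

lemma exists_matrix_of_forms {n : ℕ} {κ : Type*} {Φ : κ → (Fin 2 → ℂ) → ℂ}
    (hΦ : ∀ a, Φ a ∈ binaryForm n) :
    ∃ N : Matrix κ (Fin (n + 1)) ℂ, Φ = fun a v => (N *ᵥ veron n v) a := by
  choose N hN using fun a => mem_binaryForm.1 (hΦ a)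
  exact ⟨of N, funext₂ hN⟩

variable {ι κ : Type*} {d : ι → ℕ} {s : ℕ}

/-- Indices for coordinates on `ℙⁿ`, `n = ∑ j, d j`, adapted to subspaces of dimensions `d j - 1`
in general position: `some ⟨j, t⟩` for the `t`-th spanning vector of the `j`-th subspace, and
`none` for one complementary vector. -/
abbrev AdaptedIndex (d : ι → ℕ) := Option (Σ j, Fin (d j))

variable [Fintype ι]

/-- In adapted coordinates, there is a rational normal curve through the points `x i` that meets
each coordinate subspace `j` in `d j` points. The forms `Φ` parametrize the curve. -/
def HasAdaptedCurve (x : κ → AdaptedIndex d → ℂ) : Prop :=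
  ∃ Φ : AdaptedIndex d → (Fin 2 → ℂ) → ℂ, (∀ o, Φ o ∈ binaryForm (∑ j, d j)) ∧
    LinearIndependent ℂ Φ ∧
    (∀ i, ∃ v : Fin 2 → ℂ, v ≠ 0 ∧ ∃ c : ℂ, c ≠ 0 ∧ ∀ o, x i o = c * Φ o v) ∧
    ∀ j, ∃ w : Fin (d j) → Fin 2 → ℂ, (∀ k, w k ≠ 0) ∧
      (Pairwise fun k l => bracket (w k) (w l) ≠ 0) ∧
      ∀ k o, (∀ t, o ≠ some ⟨j, t⟩) → Φ o (w k) = 0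

variable (e : Fin (∑ j, d j + 1) ≃ AdaptedIndex d)
  (P : κ → Matrix (Fin (∑ j, d j + 1)) (Fin 1) ℂ)
  (B : (j : ι) → Matrix (Fin (∑ j, d j + 1)) (Fin (d j)) ℂ)

/-- The matrix whose columns are the vectors spanning the subspaces, completed by a standard
basis vector. -/
def adaptedMatrix : Matrix (Fin (∑ j, d j + 1)) (Fin (∑ j, d j + 1)) ℂ :=
  of fun a c => (e c).elim (if a = c then 1 else 0) fun q => B q.1 a q.2

/-- The points in adapted coordinates, up to a common scalar. The adjugate is used instead of the
inverse so that they depend polynomially on the configuration. -/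
def adaptedPoint (i : κ) (o : AdaptedIndex d) : ℂ :=
  ((adaptedMatrix e B).adjugate *ᵥ (P i).col 0) (e.symm o)

variable {e P B}

lemma col_eq_adaptedMatrix_mulVec_single (j : ι) (t : Fin (d j)) :
    (B j).col t = adaptedMatrix e B *ᵥ Pi.single (e.symm (some ⟨j, t⟩)) 1 := by
  rw [mulVec_single_one]
  funext a
  simp [adaptedMatrix]

section Invertible

variable (hT : (adaptedMatrix e B).det ≠ 0)
include hT

lemma adaptedMatrix_mulVec_injective : Function.Injective (adaptedMatrix e B).mulVec :=
  mulVec_injective_iff_isUnit.2 ((isUnit_iff_isUnit_det _).2 hT.isUnit)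

lemma mulVec_mem_span_block_iff (j : ι) (z : AdaptedIndex d → ℂ) :
    adaptedMatrix e B *ᵥ (z ∘ e) ∈ Submodule.span ℂ (Set.range (B j).col) ↔
      ∀ o, (∀ t, o ≠ some ⟨j, t⟩) → z o = 0 := by
  have hrange : Set.range (B j).col = (adaptedMatrix e B).mulVecLin ''
      (Pi.basisFun ℂ _ '' Set.range fun t => e.symm (some ⟨j, t⟩)) := by
    rw [← Set.range_comp, ← Set.range_comp]
    refine congrArg Set.range (funext fun t => ?_)
    simp [col_eq_adaptedMatrix_mulVec_single (e := e)]
  rw [hrange, Submodule.span_image, ← mulVecLin_apply, ← SetLike.mem_coe, Submodule.map_coe,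
    (show Function.Injective (adaptedMatrix e B).mulVecLin from
      adaptedMatrix_mulVec_injective hT).mem_set_image, SetLike.mem_coe,
    Module.Basis.mem_span_image, ← e.forall_congr_right]
  simp only [Set.subset_def, Finset.mem_coe, Finsupp.mem_support_iff, Pi.basisFun_repr,
    Set.mem_range, Function.comp_apply]
  refine forall_congr' fun a => ?_
  rw [← not_exists, not_imp_comm]
  simp only [e.symm_apply_eq, eq_comm (b := e a)]

lemma col_eq_smul_mulVec_iff (i : κ) (z : AdaptedIndex d → ℂ) :
    (∃ c : ℂ, c ≠ 0 ∧ (P i).col 0 = c • adaptedMatrix e B *ᵥ (z ∘ e)) ↔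
      ∃ c : ℂ, c ≠ 0 ∧ ∀ o, adaptedPoint e P B i o = c * z o := by
  set T := adaptedMatrix e B with hTdef
  have hadj (y : Fin (∑ j, d j + 1) → ℂ) : T.adjugate *ᵥ (T *ᵥ y) = T.det • y := by
    rw [mulVec_mulVec, adjugate_mul, smul_mulVec, one_mulVec]
  have hadj' (y : Fin (∑ j, d j + 1) → ℂ) : T *ᵥ (T.adjugate *ᵥ y) = T.det • y := by
    rw [mulVec_mulVec, mul_adjugate, smul_mulVec, one_mulVec]
  constructor
  · rintro ⟨c, hc, h⟩
    refine ⟨c * T.det, mul_ne_zero hc hT, fun o => ?_⟩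
    rw [adaptedPoint, h, ← hTdef, mulVec_smul, hadj]
    simp [mul_assoc]
  · rintro ⟨c, hc, h⟩
    refine ⟨T.det⁻¹ * c, mul_ne_zero (inv_ne_zero hT) hc, ?_⟩
    have hp : T.adjugate *ᵥ (P i).col 0 = c • (z ∘ e) := funext fun a => by
      simpa [adaptedPoint] using h (e a)
    rw [mul_smul, ← mulVec_smul, ← hp, hadj', inv_smul_smul₀ hT]

lemma mem_ratCurve_adapted_iff (hd : ∑ j, d j ≠ 0) (hP : ∀ i, (P i).col 0 ≠ 0)
    {N : Matrix (Fin (∑ j, d j + 1)) (Fin (∑ j, d j + 1)) ℂ} (hN : IsUnit N.det)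
    {Φ : AdaptedIndex d → (Fin 2 → ℂ) → ℂ} (hΦ : ∀ v, (Φ · v) ∘ e = N *ᵥ veron _ v) :
    ((∀ i, projSet (P i) ⊆ ratCurve (adaptedMatrix e B * N)) ∧
      ∀ j, (ratCurve (adaptedMatrix e B * N) ∩ projSet (B j)).ncard = d j) ↔
    (∀ i, ∃ v : Fin 2 → ℂ, v ≠ 0 ∧ ∃ c : ℂ, c ≠ 0 ∧ ∀ o, adaptedPoint e P B i o = c * Φ o v) ∧
    ∀ j, ∃ w : Fin (d j) → Fin 2 → ℂ, (∀ k, w k ≠ 0) ∧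
      (Pairwise fun k l => bracket (w k) (w l) ≠ 0) ∧
      ∀ k o, (∀ t, o ≠ some ⟨j, t⟩) → Φ o (w k) = 0 := by
  have hM : IsUnit (adaptedMatrix e B * N).det := by
    rw [det_mul]
    exact hT.isUnit.mul hN
  have hMv (v : Fin 2 → ℂ) :
      (adaptedMatrix e B * N) *ᵥ veron _ v = adaptedMatrix e B *ᵥ ((Φ · v) ∘ e) := by
    rw [hΦ, mulVec_mulVec]
  refine and_congr (forall_congr' fun i => ?_) (forall_congr' fun j => ?_)
  · simp only [projSet_subset_ratCurve_iff (hP i), hMv, col_eq_smul_mulVec_iff hT]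
  · have hle : d j ≤ ∑ j, d j := Finset.single_le_sum (fun _ _ => Nat.zero_le _) (Finset.mem_univ j)
    simp only [ncard_inter_projSet_eq_iff hM hd hle, hMv, mulVec_mem_span_block_iff hT]

lemma exists_isRNC_iff_hasAdaptedCurve (hd : ∑ j, d j ≠ 0) (hP : ∀ i, (P i).col 0 ≠ 0) :
    (∃ C : Set (PP (∑ j, d j)), IsRNC _ C ∧ (∀ i, projSet (P i) ⊆ C) ∧
      ∀ j, (C ∩ projSet (B j)).ncard = d j) ↔ HasAdaptedCurve (adaptedPoint e P B) := by
  have hTu : IsUnit (adaptedMatrix e B).det := hT.isUnit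
  constructor
  · rintro ⟨_, ⟨M, hM, rfl⟩, hC⟩
    obtain ⟨N, rfl⟩ : ∃ N, M = adaptedMatrix e B * N :=
      ⟨_, (mul_nonsing_inv_cancel_left _ M hTu).symm⟩
    have hN : IsUnit N.det := isUnit_of_mul_isUnit_right (det_mul (adaptedMatrix e B) N ▸ hM)
    refine ⟨fun o v => (N *ᵥ veron _ v) (e.symm o), fun o => mem_binaryForm.2 ⟨_, fun _ => rfl⟩,
      (linearIndependent_mulVec_veron_iff.2 hN).comp _ e.symm.injective,
      (mem_ratCurve_adapted_iff hT hd hP hN fun v => ?_).1 hC⟩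
    exact funext fun a => by simp
  · rintro ⟨Φ, hΦ, hli, hx⟩
    obtain ⟨N, hN⟩ := exists_matrix_of_forms fun a => hΦ (e a)
    have hNu : IsUnit N.det :=
      linearIndependent_mulVec_veron_iff.1 (hN ▸ hli.comp _ e.injective)
    refine ⟨ratCurve (adaptedMatrix e B * N), ⟨_, ?_, rfl⟩,
      (mem_ratCurve_adapted_iff hT hd hP hNu fun v => ?_).2 hx⟩
    · rw [det_mul]
      exact hTu.mul hNu
    · exact funext fun a => congrFun₂ hN a v

end Invertible

end AdaptedCoordinates

section GenericConfigurations

open Filter Matrix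

variable {r : ℕ} {d : Fin r → ℕ} {s : ℕ}

/-- Indices of the matrix entries of a configuration of `s` points and of subspaces of dimensions
`d j - 1`, laid out as in `GenHoldsPtsSpaces`. -/
abbrev ConfigIndex (s : ℕ) (d : Fin r → ℕ) :=
  (Fin s × Fin (∑ j, d j + 1) × Fin 1) ⊕ Σ j, Fin (∑ j, d j + 1) × Fin (d j)

/-- The points of the configuration with matrix entries `w`. -/
def configPoint (w : ConfigIndex s d → ℂ) (i : Fin s) : Matrix (Fin (∑ j, d j + 1)) (Fin 1) ℂ :=
  of fun a b => w (.inl (i, a, b))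

/-- The subspaces of the configuration with matrix entries `w`. -/
def configSubspace (w : ConfigIndex s d → ℂ) (j : Fin r) :
    Matrix (Fin (∑ j, d j + 1)) (Fin (d j)) ℂ :=
  of fun a t => w (.inr ⟨j, a, t⟩)

variable (e : Fin (∑ j, d j + 1) ≃ AdaptedIndex d)

/-- The configuration of the coordinate subspaces and of the points with coordinates `x`. -/
def standardConfig (x : Fin s × AdaptedIndex d → ℂ) : ConfigIndex s d → ℂ :=
  Sum.elim (fun q => x (q.1, e q.2.1)) fun q => if e q.2.1 = some ⟨q.1, q.2.2⟩ then 1 else 0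

lemma adaptedMatrix_standardConfig (x : Fin s × AdaptedIndex d → ℂ) :
    adaptedMatrix e (configSubspace (standardConfig e x)) = 1 := by
  ext a c
  obtain ⟨o, rfl⟩ := e.symm.surjective c
  cases o <;> simp [adaptedMatrix, configSubspace, standardConfig, one_apply, ← e.eq_symm_apply]

lemma adaptedPoint_standardConfig (x : Fin s × AdaptedIndex d → ℂ) (i : Fin s)
    (o : AdaptedIndex d) :
    adaptedPoint e (configPoint (standardConfig e x)) (configSubspace (standardConfig e x)) i o =
      x (i, o) := by
  rw [adaptedPoint, adaptedMatrix_standardConfig, adjugate_one, one_mulVec]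
  simp [configPoint, standardConfig]

lemma adaptedMatrix_mem_polyFun (a c : Fin (∑ j, d j + 1)) :
    (fun w : ConfigIndex s d → ℂ => adaptedMatrix e (configSubspace w) a c) ∈ polyFun _ ℂ := by
  rcases h : e c with _ | q
  · simpa only [adaptedMatrix, of_apply, h, Option.elim_none] using polyFun.const_mem _
  · simpa only [adaptedMatrix, configSubspace, of_apply, h, Option.elim_some] using
      polyFun.coord_mem (Sum.inr ⟨q.1, a, q.2⟩ : ConfigIndex s d)

lemma adaptedPoint_mem_polyFun (i : Fin s) (o : AdaptedIndex d) :
    (fun w : ConfigIndex s d → ℂ => adaptedPoint e (configPoint w) (configSubspace w) i o) ∈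
      polyFun _ ℂ := by
  simp only [adaptedPoint, mulVec, dotProduct]
  exact polyFun.sum_mem fun k _ => mul_mem
    (polyFun.adjugate_mem (adaptedMatrix_mem_polyFun e) _ k)
    (polyFun.coord_mem (Sum.inl (i, k, 0) : ConfigIndex s d))

lemma eventually_adaptedPoint {Q : (Fin s → AdaptedIndex d → ℂ) → Prop}
    (h : ∀ᶠ x in genericFilter (ℕ × AdaptedIndex d) ℂ, Q fun i o => x (i, o)) :
    ∀ᶠ w in genericFilter (ConfigIndex s d) ℂ,
      Q (adaptedPoint e (configPoint w) (configSubspace w)) := by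
  have htendsto : Tendsto (fun (w : ConfigIndex s d → ℂ) (q : Fin s × AdaptedIndex d) =>
      adaptedPoint e (configPoint w) (configSubspace w) q.1 q.2)
      (genericFilter _ ℂ) (genericFilter _ ℂ) :=
    genericFilter.tendsto_of_surjective (fun q => adaptedPoint_mem_polyFun e q.1 q.2)
      fun x => ⟨standardConfig e x, funext fun q => adaptedPoint_standardConfig e x q.1 q.2⟩
  exact htendsto.eventually (genericFilter.eventually_of_comp (Q := fun y => Q fun i o => y (i, o))
    (Fin.val_injective.prodMap Function.injective_id) h)

lemma eventually_det_adaptedMatrix_ne_zero :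
    ∀ᶠ w in genericFilter (ConfigIndex s d) ℂ, (adaptedMatrix e (configSubspace w)).det ≠ 0 :=
  genericFilter.eventually_ne_zero (polyFun.det_mem (adaptedMatrix_mem_polyFun e))
    (x₀ := standardConfig e 0) (by simp [adaptedMatrix_standardConfig])

lemma rank_eq_of_linearIndependent_col {m n : ℕ} {A : Matrix (Fin n) (Fin m) ℂ}
    (hA : LinearIndependent ℂ A.col) : A.rank = m := by
  rw [rank_eq_finrank_span_cols, finrank_span_eq_card hA, Fintype.card_fin]

lemma eventually_configPoint_col_ne_zero :
    ∀ᶠ w in genericFilter (ConfigIndex s d) ℂ, ∀ i, (configPoint w i).col 0 ≠ 0 :=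
  eventually_all.2 fun i => (genericFilter.eventually_ne_zero
    (polyFun.coord_mem (Sum.inl (i, 0, 0) : ConfigIndex s d)) (x₀ := 1) one_ne_zero).mono
    fun _ hw h => hw (congrFun h 0)

lemma eventually_full_rank : ∀ᶠ w in genericFilter (ConfigIndex s d) ℂ,
    (∀ i, (configPoint w i).rank = 1) ∧ ∀ j, (configSubspace w j).rank = d j := by
  have e : Fin (∑ j, d j + 1) ≃ AdaptedIndex d := Fintype.equivOfCardEq (by simp)
  filter_upwards [eventually_configPoint_col_ne_zero, eventually_det_adaptedMatrix_ne_zero e]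
    with w hP hT
  refine ⟨fun i => rank_eq_of_linearIndependent_col (.of_subsingleton 0 (hP i)),
    fun j => rank_eq_of_linearIndependent_col ?_⟩
  have hcol : (configSubspace w j).col =
      (adaptedMatrix e (configSubspace w)).col ∘ fun t => e.symm (some ⟨j, t⟩) :=
    funext fun t => by rw [col_eq_adaptedMatrix_mulVec_single (e := e), mulVec_single_one]; rfl
  rw [hcol]
  exact (linearIndependent_cols_iff_isUnit.2 ((isUnit_iff_isUnit_det _).2 hT.isUnit)).comp _
    fun t u h => by simpa using h

lemma genHoldsPtsSpaces_iff {Q} : GenHoldsPtsSpaces (∑ j, d j) s r d Q ↔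
    ∀ᶠ w in genericFilter (ConfigIndex s d) ℂ, Q (configPoint w) (configSubspace w) := by
  constructor
  · rintro ⟨F, hF, hQ⟩
    filter_upwards [eventually_full_rank, genericFilter.eventually_iff.2 ⟨F, hF, fun _ h => h⟩]
      with w hw hFw
    exact hQ _ _ hw.1 hw.2 <| ne_of_eq_of_ne (congrArg (fun u => MvPolynomial.eval u F)
      (funext (Sum.rec (fun _ => rfl) fun _ => rfl))) hFw
  · rintro ⟨F, hF, hQ⟩
    exact ⟨F, hF, fun P B _ _ h => hQ _ h⟩

lemma genHolds_exists_isRNC_iff (hd : ∑ j, d j ≠ 0) :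
    (GenHoldsPtsSpaces (∑ j, d j) s r d fun P B =>
      ∃ C : Set (PP (∑ j, d j)), IsRNC _ C ∧ (∀ i, projSet (P i) ⊆ C) ∧
        ∀ j, (C ∩ projSet (B j)).ncard = d j) ↔
    ∀ᶠ w in genericFilter (ConfigIndex s d) ℂ,
      HasAdaptedCurve (adaptedPoint e (configPoint w) (configSubspace w)) := by
  rw [genHoldsPtsSpaces_iff]
  refine eventually_congr ?_
  filter_upwards [eventually_configPoint_col_ne_zero, eventually_det_adaptedMatrix_ne_zero e]
    with w hP hT
  exact exists_isRNC_iff_hasAdaptedCurve hT hd hP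

lemma genHolds_of_eventually (hd : ∑ j, d j ≠ 0)
    (h : ∀ᶠ x in genericFilter (ℕ × AdaptedIndex d) ℂ,
      HasAdaptedCurve fun (i : Fin s) o => x (i, o)) :
    GenHoldsPtsSpaces (∑ j, d j) s r d fun P B =>
      ∃ C : Set (PP (∑ j, d j)), IsRNC _ C ∧ (∀ i, projSet (P i) ⊆ C) ∧
        ∀ j, (C ∩ projSet (B j)).ncard = d j := by
  have e : Fin (∑ j, d j + 1) ≃ AdaptedIndex d := Fintype.equivOfCardEq (by simp)
  exact (genHolds_exists_isRNC_iff e hd).2 (eventually_adaptedPoint e h)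

lemma not_genHolds_of_eventually (hd : ∑ j, d j ≠ 0)
    (h : ∀ᶠ x in genericFilter (ℕ × AdaptedIndex d) ℂ,
      ¬ HasAdaptedCurve fun (i : Fin s) o => x (i, o)) :
    ¬ GenHoldsPtsSpaces (∑ j, d j) s r d fun P B =>
      ∃ C : Set (PP (∑ j, d j)), IsRNC _ C ∧ (∀ i, projSet (P i) ⊆ C) ∧
        ∀ j, (C ∩ projSet (B j)).ncard = d j := by
  have e : Fin (∑ j, d j + 1) ≃ AdaptedIndex d := Fintype.equivOfCardEq (by simp)
  rw [genHolds_exists_isRNC_iff e hd, not_eventually]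
  exact (eventually_adaptedPoint (Q := fun x => ¬ HasAdaptedCurve x) e h).frequently

end GenericConfigurations

section Interpolation

open Finset Matrix

variable {m N : ℕ} {q : ℕ → Fin (m + 1) → ℂ} {τ : ℕ → Fin 2 → ℂ}

/-- The first `N` of the nodes `τ` represent distinct points of `ℙ¹`. -/
def DistinctNodes (N : ℕ) (τ : ℕ → Fin 2 → ℂ) : Prop :=
  ∀ i < N, ∀ k < N, i ≠ k → bracket (τ i) (τ k) ≠ 0

lemma DistinctNodes.ne_zero (hτ : DistinctNodes N τ) (hN : 2 ≤ N) {i : ℕ} (hi : i < N) :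
    τ i ≠ 0 := by
  intro h
  obtain ⟨k, hk, hik⟩ : ∃ k < N, i ≠ k := by
    rcases eq_or_ne i 0 with rfl | h0
    exacts [⟨1, hN, zero_ne_one⟩, ⟨0, by omega, h0⟩]
  exact hτ i hi k hk hik (by simp [h, bracket])

lemma DistinctNodes.mono (hτ : DistinctNodes N τ) {M : ℕ} (hM : M ≤ N) : DistinctNodes M τ :=
  fun i hi k hk => hτ i (hi.trans_le hM) k (hk.trans_le hM)

lemma DistinctNodes.pairwise_fin (hτ : DistinctNodes N τ) {n : ℕ} (hn : n ≤ N) :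
    Pairwise fun i k : Fin n => bracket (τ i) (τ k) ≠ 0 :=
  fun i k hik => hτ i (by omega) k (by omega) (Fin.val_ne_of_ne hik)

variable (q) in
/-- The matrix whose columns are the first `m + 1` of the vectors `q`. -/
def frame : Matrix (Fin (m + 1)) (Fin (m + 1)) ℂ := of fun a k => q k a

variable (q) in
/-- The coordinates of `q i` in the basis `q 0, …, q m`, scaled by `det (frame q)` to be
polynomial in `q`. -/
def frameCoord (i : ℕ) (k : Fin (m + 1)) : ℂ := (frame q).cramer (q i) k

lemma sum_frameCoord_mul (i : ℕ) (a : Fin (m + 1)) :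
    ∑ k : Fin (m + 1), frameCoord q i k * q k a = (frame q).det * q i a := by
  simpa [mulVec, dotProduct, frame, frameCoord, mul_comm] using
    congrFun (mulVec_cramer (frame q) (q i)) a

lemma frameCoord_eq {c : ℂ} {b : Fin (m + 1) → ℂ} {i : ℕ}
    (hb : ∀ a, c * q i a = ∑ k : Fin (m + 1), b k * q k a) (k : Fin (m + 1)) :
    c * frameCoord q i k = (frame q).det * b k := by
  have hb' : c • q i = frame q *ᵥ b := funext fun a => by
    simpa [mulVec, dotProduct, frame, mul_comm] using hb a
  have hcramer : c • (frame q).cramer (q i) = (frame q).det • b := by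
    rw [← map_smul, hb', cramer_eq_adjugate_mulVec, mulVec_mulVec, adjugate_mul, smul_mulVec,
      one_mulVec]
  exact congrFun hcramer k

/-- `H` parametrizes a curve by forms of degree `m` that passes through the points of `ℙᵐ` with
homogeneous coordinates `q i`, `i < N`, at the nodes `τ i`. -/
structure IsInterpolant (N : ℕ) (q : ℕ → Fin (m + 1) → ℂ) (τ : ℕ → Fin 2 → ℂ)
    (H : Fin (m + 1) → (Fin 2 → ℂ) → ℂ) : Prop where
  mem_binaryForm : ∀ a, H a ∈ binaryForm m
  proportional : ∀ i < N, ∃ μ : ℂ, μ ≠ 0 ∧ ∀ a, H a (τ i) = μ * q i a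

variable (q τ) in
/-- The Lagrange interpolant through the points `q 0, …, q m` at the nodes `τ 0, …, τ m`; the
weights `θ` scale the representatives of these points. -/
def lagrangeForm (θ : Fin (m + 1) → ℂ) (a : Fin (m + 1)) (v : Fin 2 → ℂ) : ℂ :=
  ∑ k : Fin (m + 1), θ k * q k a * ∏ l ∈ univ.erase k, bracket v (τ l)

variable {θ : Fin (m + 1) → ℂ}

lemma lagrangeForm_mem_binaryForm (a : Fin (m + 1)) : lagrangeForm q τ θ a ∈ binaryForm m :=
  binaryForm.sum_mem fun k _ => binaryForm.const_mul_mem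
    (by simpa using binaryForm.prod_bracket_mem (univ.erase k) fun l : Fin (m + 1) => τ l) _

lemma lagrangeForm_node (k a : Fin (m + 1)) :
    lagrangeForm q τ θ a (τ k) = (θ k * ∏ l ∈ univ.erase k, bracket (τ k) (τ l)) * q k a := by
  rw [lagrangeForm, Finset.sum_eq_single k]
  · ring
  · intro l _ hl
    exact mul_eq_zero_of_right _ (prod_eq_zero (mem_erase.2 ⟨hl.symm, mem_univ k⟩) (bracket_self _))
  · simp

lemma proportional_lagrangeForm_iff (hdet : (frame q).det ≠ 0) {i : ℕ}
    (hτ : ∀ k : Fin (m + 1), bracket (τ i) (τ k) ≠ 0) :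
    (∃ μ : ℂ, μ ≠ 0 ∧ ∀ a, lagrangeForm q τ θ a (τ i) = μ * q i a) ↔
      ∃ ρ : ℂ, ρ ≠ 0 ∧ ∀ k, frameCoord q i k * bracket (τ i) (τ k) = ρ * θ k := by
  set D := ∏ k : Fin (m + 1), bracket (τ i) (τ k)
  have hD0 : D ≠ 0 := prod_ne_zero_iff.2 fun k _ => hτ k
  have herase (k : Fin (m + 1)) :
      ∏ l ∈ univ.erase k, bracket (τ i) (τ l) = D / bracket (τ i) (τ k) := by
    rw [eq_div_iff (hτ k), prod_erase_mul univ (fun l : Fin (m + 1) => bracket (τ i) (τ l))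
      (mem_univ k)]
  simp only [lagrangeForm, herase]
  constructor
  · rintro ⟨μ, hμ, h⟩
    refine ⟨(frame q).det * D / μ, div_ne_zero (mul_ne_zero hdet hD0) hμ, fun k => ?_⟩
    have hk := frameCoord_eq (c := μ) (b := fun k => θ k * (D / bracket (τ i) (τ k)))
      (fun a => by rw [← h]; exact sum_congr rfl fun _ _ => by ring) k
    have hτk := hτ k
    field_simp at hk ⊢
    linear_combination hk
  · rintro ⟨ρ, hρ, h⟩
    refine ⟨D * (frame q).det / ρ, div_ne_zero (mul_ne_zero hD0 hdet) hρ, fun a => ?_⟩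
    have hθ (k : Fin (m + 1)) : θ k = frameCoord q i k * bracket (τ i) (τ k) / ρ := by
      rw [h, mul_div_cancel_left₀ _ hρ]
    rw [mul_div_right_comm, mul_assoc, ← sum_frameCoord_mul, mul_sum]
    refine sum_congr rfl fun k _ => ?_
    have hτk := hτ k
    rw [hθ]
    field_simp

lemma isInterpolant_lagrangeForm_iff (hdet : (frame q).det ≠ 0) (hτ : DistinctNodes N τ)
    (hN : m + 1 ≤ N) (hθ : ∀ k, θ k ≠ 0) :
    IsInterpolant N q τ (lagrangeForm q τ θ) ↔ ∀ i, m < i → i < N →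
      ∃ ρ : ℂ, ρ ≠ 0 ∧ ∀ k, frameCoord q i k * bracket (τ i) (τ k) = ρ * θ k := by
  have hne (i : ℕ) (hi : m < i) (hiN : i < N) (k : Fin (m + 1)) : bracket (τ i) (τ k) ≠ 0 :=
    hτ i hiN k (by omega) (by omega)
  refine ⟨fun h i hi hiN =>
    (proportional_lagrangeForm_iff hdet (hne i hi hiN)).1 (h.proportional i hiN),
    fun h => ⟨lagrangeForm_mem_binaryForm, fun i hiN => ?_⟩⟩
  rcases lt_or_ge m i with hi | hi
  · exact (proportional_lagrangeForm_iff hdet (hne i hi hiN)).2 (h i hi hiN)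
  · exact ⟨_, mul_ne_zero (hθ ⟨i, by omega⟩)
      (binaryForm.prod_erase_bracket_ne_zero (hτ.pairwise_fin hN) _),
      lagrangeForm_node (⟨i, by omega⟩ : Fin (m + 1))⟩

variable {H : Fin (m + 1) → (Fin 2 → ℂ) → ℂ}

lemma IsInterpolant.exists_eq_lagrangeForm (hH : IsInterpolant N q τ H) (hτ : DistinctNodes N τ)
    (hN : m + 1 ≤ N) : ∃ θ : Fin (m + 1) → ℂ, (∀ k, θ k ≠ 0) ∧ H = lagrangeForm q τ θ := by
  choose μ hμ h using fun k : Fin (m + 1) => hH.proportional k (by omega)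
  have hpair := hτ.pairwise_fin hN
  refine ⟨fun k => μ k / ∏ l ∈ univ.erase k, bracket (τ k) (τ l),
    fun k => div_ne_zero (hμ k) (binaryForm.prod_erase_bracket_ne_zero hpair k), ?_⟩
  funext a v
  rw [binaryForm.lagrange hpair (by simp) (hH.mem_binaryForm a), lagrangeForm]
  exact sum_congr rfl fun k _ => by rw [h]; ring

lemma IsInterpolant.frame_det_ne_zero_iff (hH : IsInterpolant N q τ H) (hτ : DistinctNodes N τ)
    (hN : m + 2 ≤ N) : (frame q).det ≠ 0 ↔ LinearIndependent ℂ H := by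
  choose μ hμ h using fun k : Fin (m + 1) => hH.proportional k (by omega)
  obtain ⟨M, rfl⟩ := exists_matrix_of_forms hH.mem_binaryForm
  let V : Matrix (Fin (m + 1)) (Fin (m + 1)) ℂ := of fun a k => veron m (τ k) a
  have hV : V.det ≠ 0 := ((isUnit_iff_isUnit_det _).1 (linearIndependent_cols_iff_isUnit.1
    (veron_linearIndependent le_rfl (fun k => hτ.ne_zero (by omega) (by omega))
      (hτ.pairwise_fin (by omega))))).ne_zero
  have hmul : M * V = frame q * diagonal μ := by
    ext a k
    rw [mul_diagonal, frame, of_apply, mul_comm, ← h]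
    rfl
  have hdet : M.det * V.det = (frame q).det * ∏ k, μ k := by
    rw [← det_mul, hmul, det_mul, det_diagonal]
  have hμ' : ∏ k, μ k ≠ 0 := prod_ne_zero_iff.2 fun k _ => hμ k
  rw [linearIndependent_mulVec_veron_iff, isUnit_iff_ne_zero, ← mul_ne_zero_iff_right hμ',
    ← hdet, mul_ne_zero_iff_right hV]

variable (q τ) in
/-- The weights for which the Lagrange interpolant also passes through `q (m + 1)` at
`τ (m + 1)`. -/
def interpWeight (k : Fin (m + 1)) : ℂ :=
  frameCoord q (m + 1) k * bracket (τ (m + 1)) (τ k)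

lemma IsInterpolant.exists_frameCoord_mul_bracket (hH : IsInterpolant N q τ H)
    (hτ : DistinctNodes N τ) (hdet : (frame q).det ≠ 0) (hN : m + 1 ≤ N) :
    ∃ θ : Fin (m + 1) → ℂ, (∀ k, θ k ≠ 0) ∧ ∀ i, m < i → i < N →
      ∃ ρ : ℂ, ρ ≠ 0 ∧ ∀ k, frameCoord q i k * bracket (τ i) (τ k) = ρ * θ k := by
  obtain ⟨θ, hθ, rfl⟩ := hH.exists_eq_lagrangeForm hτ hN
  exact ⟨θ, hθ, (isInterpolant_lagrangeForm_iff hdet hτ hN hθ).1 hH⟩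

/-- The cross ratio of the nodes `k`, `l`, `a`, `b` is determined by the points. -/
lemma IsInterpolant.frameCoord_mul_bracket_swap (hH : IsInterpolant N q τ H)
    (hτ : DistinctNodes N τ) (hdet : (frame q).det ≠ 0) {a b : ℕ} (ha : m < a) (haN : a < N)
    (hb : m < b) (hbN : b < N) (k l : Fin (m + 1)) :
    frameCoord q a k * frameCoord q b l * (bracket (τ a) (τ k) * bracket (τ b) (τ l)) =
      frameCoord q a l * frameCoord q b k * (bracket (τ a) (τ l) * bracket (τ b) (τ k)) := by
  obtain ⟨θ, -, h⟩ := hH.exists_frameCoord_mul_bracket hτ hdet (by omega)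
  obtain ⟨ρ, -, hρ⟩ := h a ha haN
  obtain ⟨ρ', -, hρ'⟩ := h b hb hbN
  linear_combination (frameCoord q b l * bracket (τ b) (τ l)) * hρ k + ρ * θ k * hρ' l -
    (frameCoord q b k * bracket (τ b) (τ k)) * hρ l - ρ * θ l * hρ' k

lemma det_bracket_eq_zero (u w : Fin 3 → Fin 2 → ℂ) :
    (of fun a b => bracket (u a) (w b)).det = 0 := by
  simp only [det_fin_three, of_apply, bracket]
  ring

variable (q) in
/-- The `3 × 3` minor in the columns `k` of the entrywise inverses of the vectors
`frameCoord q (m + 1 + a)`, `a < 3`, with cleared denominators. -/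
def inverseCoordMinor (k : Fin 3 → Fin (m + 1)) : ℂ :=
  (of fun a b : Fin 3 => ∏ c : Fin 2, frameCoord q (m + 1 + (a.succAbove c : ℕ)) (k b)).det

/-- The inverses of the coordinates are proportional to brackets, and a matrix of brackets has
rank at most two. -/
lemma IsInterpolant.inverseCoordMinor_eq_zero (hH : IsInterpolant N q τ H)
    (hτ : DistinctNodes N τ) (hdet : (frame q).det ≠ 0) (hN : m + 4 ≤ N)
    (k : Fin 3 → Fin (m + 1)) : inverseCoordMinor q k = 0 := by
  obtain ⟨θ, hθ, h⟩ := hH.exists_frameCoord_mul_bracket hτ hdet (by omega)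
  choose ρ hρ hf using fun a : Fin 3 => h (m + 1 + a) (by omega) (by omega)
  have hentry (a b : Fin 3) :
      ∏ c : Fin 2, frameCoord q (m + 1 + (a.succAbove c : ℕ)) (k b) =
        (ρ a)⁻¹ * ((∏ c : Fin 3, frameCoord q (m + 1 + c) (k b)) / θ (k b) *
          bracket (τ (m + 1 + a)) (τ (k b))) := by
    rw [Fin.prod_univ_succAbove _ a]
    have hρa := hρ a
    have hθb := hθ (k b)
    field_simp
    linear_combination (-∏ c : Fin 2, frameCoord q (m + 1 + (a.succAbove c : ℕ)) (k b)) * hf a (k b)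
  simp only [inverseCoordMinor, hentry]
  refine (det_mul_column (fun a => (ρ a)⁻¹) (of fun a b : Fin 3 =>
    (∏ c : Fin 3, frameCoord q (m + 1 + c) (k b)) / θ (k b) *
      bracket (τ (m + 1 + a)) (τ (k b)))).trans (mul_eq_zero_of_right _ ?_)
  refine (det_mul_row (fun b => (∏ c : Fin 3, frameCoord q (m + 1 + c) (k b)) / θ (k b))
    (of fun a b : Fin 3 => bracket (τ (m + 1 + a)) (τ (k b)))).trans (mul_eq_zero_of_right _ ?_)
  exact det_bracket_eq_zero (fun a => τ (m + 1 + a)) fun b => τ (k b)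

lemma IsInterpolant.lagrangeForm_interpWeight_eq_smul (hH : IsInterpolant N q τ H)
    (hτ : DistinctNodes N τ) (hdet : (frame q).det ≠ 0) (hN : m + 2 ≤ N) :
    ∃ c : ℂ, c ≠ 0 ∧ lagrangeForm q τ (interpWeight q τ) = c • H := by
  obtain ⟨θ, hθ, rfl⟩ := hH.exists_eq_lagrangeForm hτ (by omega)
  obtain ⟨ρ, hρ, h⟩ := (isInterpolant_lagrangeForm_iff hdet hτ (by omega) hθ).1 hH (m + 1)
    (by omega) (by omega)
  refine ⟨ρ, hρ, funext₂ fun a v => ?_⟩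
  simp only [lagrangeForm, interpWeight, h, Pi.smul_apply, smul_eq_mul, mul_sum, mul_assoc]

variable {σ : ℕ → Fin 2 → ℂ}

lemma DistinctNodes.of_smul (hτ : DistinctNodes N τ)
    (hσ : ∀ i, ∃ γ : ℂ, γ ≠ 0 ∧ σ i = γ • τ i) : DistinctNodes N σ := by
  intro i hi k hk hik
  obtain ⟨γ, hγ, hi'⟩ := hσ i
  obtain ⟨δ, hδ, hk'⟩ := hσ k
  have hbracket : bracket (σ i) (σ k) = γ * δ * bracket (τ i) (τ k) := by
    simp only [hi', hk', bracket, Pi.smul_apply, smul_eq_mul]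
    ring
  rw [hbracket]
  exact mul_ne_zero (mul_ne_zero hγ hδ) (hτ i hi k hk hik)

lemma IsInterpolant.of_smul (hH : IsInterpolant N q τ H)
    (hσ : ∀ i, ∃ γ : ℂ, γ ≠ 0 ∧ σ i = γ • τ i) : IsInterpolant N q σ H := by
  refine ⟨hH.mem_binaryForm, fun i hi => ?_⟩
  obtain ⟨γ, hγ, hi'⟩ := hσ i
  obtain ⟨μ, hμ, h⟩ := hH.proportional i hi
  exact ⟨γ ^ m * μ, mul_ne_zero (pow_ne_zero _ hγ) hμ, fun a => by
    rw [hi', binaryForm.apply_smul (hH.mem_binaryForm a), h, mul_assoc]⟩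

lemma IsInterpolant.mono (hH : IsInterpolant N q τ H) {M : ℕ} (hM : M ≤ N) :
    IsInterpolant M q τ H :=
  ⟨hH.mem_binaryForm, fun i hi => hH.proportional i (hi.trans_le hM)⟩

lemma IsInterpolant.lagrangeForm_interpWeight (hH : IsInterpolant N q τ H)
    (hτ : DistinctNodes N τ) (hdet : (frame q).det ≠ 0) (hN : m + 2 ≤ N) :
    IsInterpolant N q τ (lagrangeForm q τ (interpWeight q τ)) := by
  obtain ⟨c, hc, h⟩ := hH.lagrangeForm_interpWeight_eq_smul hτ hdet hN
  refine ⟨lagrangeForm_mem_binaryForm, fun i hi => ?_⟩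
  obtain ⟨μ, hμ, hμ'⟩ := hH.proportional i hi
  exact ⟨c * μ, mul_ne_zero hc hμ, fun a => by simp [h, hμ', mul_assoc]⟩

lemma interpWeight_ne_zero (hτ : DistinctNodes (m + 2) τ)
    (hc : ∀ k, frameCoord q (m + 1) k ≠ 0) (k : Fin (m + 1)) : interpWeight q τ k ≠ 0 :=
  mul_ne_zero (hc k) (hτ _ (by omega) _ (by omega) (by omega))

lemma isInterpolant_lagrangeForm_interpWeight (hdet : (frame q).det ≠ 0)
    (hτ : DistinctNodes (m + 2) τ) (hc : ∀ k, frameCoord q (m + 1) k ≠ 0) :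
    IsInterpolant (m + 2) q τ (lagrangeForm q τ (interpWeight q τ)) := by
  refine (isInterpolant_lagrangeForm_iff hdet hτ (by omega) (interpWeight_ne_zero hτ hc)).2
    fun i hi hiN => ⟨1, one_ne_zero, fun k => ?_⟩
  obtain rfl : i = m + 1 := by omega
  rw [one_mul, interpWeight]

open Polynomial in
variable (q τ) in
/-- The dehomogenization of the first coordinate form of `lagrangeForm q τ θ`. -/
def lagrangePoly (θ : Fin (m + 1) → ℂ) : ℂ[X] :=
  ∑ k : Fin (m + 1), C (θ k * q k 0) *
    ∏ l ∈ univ.erase k, (C (τ l 1) * X - C (τ l 0))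

lemma eval_lagrangePoly (t : ℂ) :
    (lagrangePoly q τ θ).eval t = lagrangeForm q τ θ 0 ![t, 1] := by
  simp [lagrangePoly, lagrangeForm, Polynomial.eval_finsetSum, Polynomial.eval_prod, bracket,
    mul_comm t]

lemma natDegree_lagrangePoly_le : (lagrangePoly q τ θ).natDegree ≤ m := by
  refine Polynomial.natDegree_sum_le_of_forall_le _ _ fun k _ => ?_
  refine (Polynomial.natDegree_C_mul_le _ _).trans ((Polynomial.natDegree_prod_le _ _).trans ?_)
  refine (sum_le_card_nsmul _ _ 1 fun l _ => ?_).trans (by simp)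
  compute_degree

end Interpolation

section Blocks

open Finset

variable {ι : Type*} [Fintype ι] {d : ι → ℕ} {s : ℕ}

/-- The indices `none` and `some ⟨j, t⟩` of the coordinates on the projection to `ℙ^(d j)` from
the span of the subspaces other than the `j`-th. -/
def blockIndex (j : ι) : Fin (d j + 1) → AdaptedIndex d := Fin.cons none fun t => some ⟨j, t⟩

/-- The projections to `ℙ^(d j)`, from the span of the subspaces other than the `j`-th, of the
points with adapted coordinates `x`. -/
def blockPoint (x : ℕ × AdaptedIndex d → ℂ) (j : ι) (i : ℕ) (a : Fin (d j + 1)) : ℂ :=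
  x (i, blockIndex j a)

variable {x : ℕ × AdaptedIndex d → ℂ} {Φ : AdaptedIndex d → (Fin 2 → ℂ) → ℂ}

lemma exists_apply_ne_zero (hΦ : ∀ o, Φ o ∈ binaryForm (∑ j, d j)) (hli : LinearIndependent ℂ Φ)
    {v : Fin 2 → ℂ} (hv : v ≠ 0) : ∃ o, Φ o v ≠ 0 := by
  let e : Fin (∑ j, d j + 1) ≃ AdaptedIndex d := Fintype.equivOfCardEq (by simp)
  obtain ⟨N, hN⟩ := exists_matrix_of_forms fun a => hΦ (e a)
  have hdet : N.det ≠ 0 :=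
    (linearIndependent_mulVec_veron_iff.1 (hN ▸ hli.comp _ e.injective)).ne_zero
  by_contra! h
  exact veron_ne_zero hv (Matrix.eq_zero_of_mulVec_eq_zero hdet
    (funext fun a => (congrFun₂ hN a v).symm.trans (h (e a))))

lemma card_sigma_erase_add [DecidableEq ι] (j : ι) :
    ((univ.erase j).sigma fun i => (univ : Finset (Fin (d i)))).card + d j = ∑ j, d j := by
  simp [card_sigma, sum_erase_add]

/-- A form vanishing at the nodes of all subspaces but the `j`-th is divisible by the equation of
these nodes, so the projection from their span lowers the degree to `d j`. -/
lemma exists_block_factorization (hΦ : ∀ o, Φ o ∈ binaryForm (∑ j, d j))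
    (hli : LinearIndependent ℂ Φ) {W : ∀ j, Fin (d j) → Fin 2 → ℂ} (hW : ∀ j k, W j k ≠ 0)
    (hWW : ∀ j, Pairwise fun k l => bracket (W j k) (W j l) ≠ 0)
    (hΦW : ∀ j k o, (∀ t, o ≠ some ⟨j, t⟩) → Φ o (W j k) = 0) (j : ι) :
    ∃ (G : (Fin 2 → ℂ) → ℂ) (H : Fin (d j + 1) → (Fin 2 → ℂ) → ℂ),
      (∀ a, H a ∈ binaryForm (d j)) ∧ ∀ a v, Φ (blockIndex j a) v = G v * H a v := by
  classical
  have hWW' : Pairwise fun q q' : Σ j, Fin (d j) => bracket (W q.1 q.2) (W q'.1 q'.2) ≠ 0 := by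
    rintro ⟨i, k⟩ ⟨i', k'⟩ hne
    rcases eq_or_ne i i' with rfl | hi
    · exact hWW i fun h => hne (congrArg _ h)
    intro h
    obtain ⟨c, -, hc⟩ := (bracket_eq_zero_iff (hW i k) (hW i' k')).1 h
    obtain ⟨o, ho⟩ := exists_apply_ne_zero hΦ hli (hW i k)
    refine ho ?_
    by_cases hoi : ∃ t, o = some ⟨i, t⟩
    · obtain ⟨t, rfl⟩ := hoi
      rw [hc, binaryForm.apply_smul (hΦ _), hΦW i' k' _ (by simp [hi]), mul_zero]
    · exact hΦW i k o fun t ht => hoi ⟨t, ht⟩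
  have hzero (a : Fin (d j + 1)) : ∀ q ∈ (univ.erase j).sigma fun i => (univ : Finset (Fin (d i))),
      Φ (blockIndex j a) (W q.1 q.2) = 0 := by
    intro q hq
    have hqj : j ≠ q.1 := by simpa [eq_comm] using hq
    refine hΦW _ _ _ fun t => ?_
    cases a using Fin.cases <;> simp [blockIndex, hqj]
  choose H hH hΦH using fun a => binaryForm.exists_eq_prod_bracket_mul (fun q _ => hW q.1 q.2)
    (hWW'.set_pairwise _) ((card_sigma_erase_add j).symm ▸ hΦ (blockIndex j a)) (hzero a)
  exact ⟨_, H, hH, hΦH⟩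

lemma HasAdaptedCurve.exists_isInterpolant
    (hx : HasAdaptedCurve fun (i : Fin s) o => x (i, o)) (h0 : ∀ i < s, x (i, none) ≠ 0)
    {p : AdaptedIndex d}
    (hp : ∀ i < s, ∀ k < s, i ≠ k → x (i, none) * x (k, p) - x (k, none) * x (i, p) ≠ 0) :
    ∃ τ, DistinctNodes s τ ∧ ∀ j, ∃ H, IsInterpolant s (blockPoint x j) τ H := by
  obtain ⟨Φ, hΦ, hli, hpoint, hblock⟩ := hx
  choose W hW hWW hΦW using hblock
  have hnode (i : ℕ) :
      ∃ v : Fin 2 → ℂ, i < s → v ≠ 0 ∧ ∃ c : ℂ, c ≠ 0 ∧ ∀ o, x (i, o) = c * Φ o v :=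
    if hi : i < s then (hpoint ⟨i, hi⟩).imp fun _ h _ => h else ⟨0, fun h => absurd h hi⟩
  choose τ hτ using hnode
  refine ⟨τ, fun i hi k hk hik hbr => ?_, fun j => ?_⟩
  · obtain ⟨hτi, c, -, hxi⟩ := hτ i hi
    obtain ⟨hτk, c', -, hxk⟩ := hτ k hk
    obtain ⟨b, -, hb⟩ := (bracket_eq_zero_iff hτi hτk).1 hbr
    refine hp i hi k hk hik ?_
    rw [hxi, hxi, hxk, hxk, hb, binaryForm.apply_smul (hΦ _), binaryForm.apply_smul (hΦ _)]
    ring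
  · obtain ⟨G, H, hH, hGH⟩ := exists_block_factorization hΦ hli hW hWW hΦW j
    refine ⟨H, hH, fun i hi => ?_⟩
    obtain ⟨-, c, hc, hxi⟩ := hτ i hi
    have hG : G (τ i) ≠ 0 := fun hG => h0 i hi <| by
      rw [hxi, show none = blockIndex j 0 from rfl, hGH, hG, zero_mul, mul_zero]
    refine ⟨(c * G (τ i))⁻¹, inv_ne_zero (mul_ne_zero hc hG), fun a => ?_⟩
    rw [blockPoint, hxi, hGH, ← mul_assoc c, inv_mul_cancel_left₀ (mul_ne_zero hc hG)]

lemma eq_zero_of_sum_mul_succ_eq_zero {m : ℕ} {W : Fin m → Fin 2 → ℂ} (hW : ∀ k, W k ≠ 0)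
    (hWW : Pairwise fun k l => bracket (W k) (W l) ≠ 0) {H : Fin (m + 1) → (Fin 2 → ℂ) → ℂ}
    (hH : ∀ a, H a ∈ binaryForm m) (hli : LinearIndependent ℂ H) (hHW : ∀ k, H 0 (W k) = 0)
    {c : Fin m → ℂ} (hc : ∀ k, ∑ t, c t * H t.succ (W k) = 0) : c = 0 := by
  obtain ⟨b, hb⟩ := binaryForm.exists_eq_smul hW hWW (f := fun v => ∑ t, c t * H t.succ v)
    (by simpa using binaryForm.sum_mem fun t _ => binaryForm.const_mul_mem (hH t.succ) (c t)) hc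
    (by simpa using hH 0) hHW (hli.ne_zero 0)
  have hrel : ∑ a, (Fin.cons (-b) c : Fin (m + 1) → ℂ) a • H a = 0 := by
    funext v
    have hv : ∑ t, c t * H t.succ v = b * H 0 v := congrFun hb v
    simp [Fin.sum_univ_succ, hv]
  funext t
  simpa using Fintype.linearIndependent_iff.1 hli _ hrel t.succ

variable {H : ∀ j, Fin (d j + 1) → (Fin 2 → ℂ) → ℂ}

section GluedForm

variable [DecidableEq ι]

/-- The common lift to `ℙ^(∑ j, d j)` of curves in the `ℙ^(d j)` given by the forms `H j`. -/
def gluedForm (H : ∀ j, Fin (d j + 1) → (Fin 2 → ℂ) → ℂ) (o : AdaptedIndex d) (v : Fin 2 → ℂ) : ℂ :=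
  o.elim (∏ j, H j 0 v) fun q => H q.1 q.2.succ v * ∏ i ∈ univ.erase q.1, H i 0 v

lemma gluedForm_mem_binaryForm (hH : ∀ j a, H j a ∈ binaryForm (d j)) (o : AdaptedIndex d) :
    gluedForm H o ∈ binaryForm (∑ j, d j) := by
  rcases o with _ | ⟨j, t⟩
  · exact binaryForm.prod_mem fun j _ => hH j 0
  · rw [← add_sum_erase univ d (mem_univ j)]
    exact binaryForm.mul_mem (hH j t.succ) (binaryForm.prod_mem fun i _ => hH i 0)

lemma gluedForm_apply_node {W : (Σ j, Fin (d j)) → Fin 2 → ℂ}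
    (hHW : ∀ q : Σ j, Fin (d j), H q.1 0 (W q) = 0) {q : Σ j, Fin (d j)} {o : AdaptedIndex d}
    (ho : ∀ t, o ≠ some ⟨q.1, t⟩) : gluedForm H o (W q) = 0 := by
  rcases o with _ | ⟨j, t⟩
  · exact prod_eq_zero (mem_univ q.1) (hHW q)
  · have hqj : q.1 ≠ j := by
      rintro rfl
      exact ho t rfl
    exact mul_eq_zero_of_right _ (prod_eq_zero (mem_erase.2 ⟨hqj, mem_univ _⟩) (hHW q))

lemma exists_eq_gluedForm_node {i : ℕ} (h0 : x (i, none) ≠ 0) {v : Fin 2 → ℂ}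
    (hv : ∀ j, ∃ μ : ℂ, μ ≠ 0 ∧ ∀ a, H j a v = μ * blockPoint x j i a) :
    ∃ c : ℂ, c ≠ 0 ∧ ∀ o, x (i, o) = c * gluedForm H o v := by
  choose μ hμ h using hv
  have hne (j : ι) : H j 0 v ≠ 0 := by
    rw [h]
    exact mul_ne_zero (hμ j) h0
  have hprod : ∏ j, H j 0 v ≠ 0 := prod_ne_zero_iff.2 fun j _ => hne j
  refine ⟨x (i, none) / ∏ j, H j 0 v, div_ne_zero h0 hprod, fun o => ?_⟩
  rcases o with _ | ⟨j, t⟩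
  · exact (div_mul_cancel₀ _ hprod).symm
  · have ht : H j t.succ v * x (i, none) = H j 0 v * x (i, some ⟨j, t⟩) := by
      rw [h, h]
      simp only [blockPoint, blockIndex, Fin.cons_zero, Fin.cons_succ]
      ring
    have herase : ∏ i ∈ univ.erase j, H i 0 v ≠ 0 := prod_ne_zero_iff.2 fun i _ => hne i
    have hnej := hne j
    rw [gluedForm, Option.elim_some, ← mul_prod_erase univ _ (mem_univ j)]
    field_simp
    linear_combination -ht

section Nodes

variable {W : (Σ j, Fin (d j)) → Fin 2 → ℂ} (hW : ∀ q, W q ≠ 0)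
  (hWW : Pairwise fun q q' => bracket (W q) (W q') ≠ 0)
include hW hWW

lemma gluedForm_relation_apply_node (hH : ∀ j, H j 0 ∈ binaryForm (d j)) (hne : ∀ j, H j 0 ≠ 0)
    (hHW : ∀ q : Σ j, Fin (d j), H q.1 0 (W q) = 0) {c : AdaptedIndex d → ℂ}
    (hc : ∑ o, c o • gluedForm H o = 0) (q : Σ j, Fin (d j)) :
    ∑ t, c (some ⟨q.1, t⟩) * H q.1 t.succ (W q) = 0 := by
  have hprod : ∏ i ∈ univ.erase q.1, H i 0 (W q) ≠ 0 := prod_ne_zero_iff.2 fun j hj =>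
    binaryForm.apply_ne_zero (W := fun k => W ⟨j, k⟩) (fun k => hW ⟨j, k⟩)
      (hWW.comp_of_injective sigma_mk_injective) (by simpa using hH j) (fun k => hHW ⟨j, k⟩) (hne j)
      fun k => hWW fun h => ne_of_mem_erase hj (by rw [h])
  refine (mul_eq_zero.1 ?_).resolve_right hprod
  have h : ∑ o, c o * gluedForm H o (W q) = 0 := by simpa using congrFun hc (W q)
  rw [Fintype.sum_option, Fintype.sum_sigma] at h
  rw [gluedForm_apply_node hHW (by simp), mul_zero, zero_add, sum_eq_single q.1
    (fun j _ hj => sum_eq_zero fun t _ => by rw [gluedForm_apply_node hHW (by simp [hj]), mul_zero])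
    (by simp)] at h
  simpa only [sum_mul, mul_assoc, gluedForm, Option.elim_some] using h

lemma linearIndependent_gluedForm (hH : ∀ j a, H j a ∈ binaryForm (d j))
    (hli : ∀ j, LinearIndependent ℂ (H j)) (hHW : ∀ q : Σ j, Fin (d j), H q.1 0 (W q) = 0) :
    LinearIndependent ℂ (gluedForm H) := by
  have hne (j : ι) : H j 0 ≠ 0 := (hli j).ne_zero 0
  rw [Fintype.linearIndependent_iff]
  intro c hc
  have hblock (q : Σ j, Fin (d j)) : c (some q) = 0 := by
    obtain ⟨j, t⟩ := q
    exact congrFun (eq_zero_of_sum_mul_succ_eq_zero (fun k => hW ⟨j, k⟩)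
      (hWW.comp_of_injective sigma_mk_injective) (hH j) (hli j) (fun k => hHW ⟨j, k⟩)
      (c := fun t => c (some ⟨j, t⟩)) fun k =>
        gluedForm_relation_apply_node hW hWW (fun j => hH j 0) hne hHW hc ⟨j, k⟩) t
  obtain ⟨v, hv⟩ := exists_forall_bracket_ne_zero hW
  rintro (_ | q)
  · have h : c none * ∏ j, H j 0 v = 0 := by
      simpa [Fintype.sum_option, hblock, gluedForm] using congrFun hc v
    exact (mul_eq_zero.1 h).resolve_right (prod_ne_zero_iff.2 fun j _ =>
      binaryForm.apply_ne_zero (W := fun k => W ⟨j, k⟩) (fun k => hW ⟨j, k⟩)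
        (hWW.comp_of_injective sigma_mk_injective) (by simpa using hH j 0)
        (fun k => hHW ⟨j, k⟩) (hne j) fun k => hv ⟨j, k⟩)
  · exact hblock q

end Nodes

end GluedForm

lemma hasAdaptedCurve_of_isInterpolant {W : (Σ j, Fin (d j)) → Fin 2 → ℂ} (hW : ∀ q, W q ≠ 0)
    (hWW : Pairwise fun q q' => bracket (W q) (W q') ≠ 0) {τ : ℕ → Fin 2 → ℂ}
    (hτ : ∀ i < s, τ i ≠ 0) (h0 : ∀ i < s, x (i, none) ≠ 0)
    (hH : ∀ j, IsInterpolant s (blockPoint x j) τ (H j)) (hli : ∀ j, LinearIndependent ℂ (H j))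
    (hHW : ∀ q : Σ j, Fin (d j), H q.1 0 (W q) = 0) :
    HasAdaptedCurve fun (i : Fin s) o => x (i, o) := by
  classical
  have hmem (j : ι) := (hH j).mem_binaryForm
  exact ⟨gluedForm H, gluedForm_mem_binaryForm hmem,
    linearIndependent_gluedForm hW hWW hmem hli hHW,
    fun i => ⟨τ i, hτ i i.2,
      exists_eq_gluedForm_node (h0 i i.2) fun j => (hH j).proportional i i.2⟩,
    fun j => ⟨fun k => W ⟨j, k⟩, fun k => hW _,
      hWW.comp_of_injective sigma_mk_injective,
      fun k _ ho => gluedForm_apply_node hHW (q := ⟨j, k⟩) ho⟩⟩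

end Blocks

section Obstructions

open Filter Matrix

variable {ι : Type*} {d : ι → ℕ} {s m : ℕ} {j j₀ j₁ : ι}

lemma blockPoint_mem_polyFun (j : ι) (i : ℕ) (a : Fin (d j + 1)) :
    (fun x : ℕ × AdaptedIndex d → ℂ => blockPoint x j i a) ∈ polyFun _ ℂ :=
  polyFun.coord_mem (i, blockIndex j a)

lemma frame_det_mem_polyFun (j : ι) :
    (fun x : ℕ × AdaptedIndex d → ℂ => (frame (blockPoint x j)).det) ∈ polyFun _ ℂ :=
  polyFun.det_mem (A := fun x => frame (blockPoint x j)) fun a k => blockPoint_mem_polyFun j k a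

lemma frameCoord_mem_polyFun (j : ι) (i : ℕ) (k : Fin (d j + 1)) :
    (fun x : ℕ × AdaptedIndex d → ℂ => frameCoord (blockPoint x j) i k) ∈ polyFun _ ℂ :=
  polyFun.cramer_mem (A := fun x => frame (blockPoint x j)) (b := fun x => blockPoint x j i)
    (fun a k => blockPoint_mem_polyFun j k a) (blockPoint_mem_polyFun j i) k

/-- The position of an index in its block, so that `blockIndex j` inverts it on the `j`-th block. -/
def blockPos (o : AdaptedIndex d) : ℕ := o.elim 0 fun p => p.2 + 1

@[simp]
lemma blockPos_blockIndex (j : ι) (a : Fin (d j + 1)) : blockPos (blockIndex j a) = a := by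
  cases a using Fin.cases <;> simp [blockPos, blockIndex]

/-- A configuration whose first `m + 1` points project to coordinate points and whose points of
index greater than `m` are prescribed by `y`. -/
def frameConfig (m : ℕ) (y : ℕ → AdaptedIndex d → ℂ) (q : ℕ × AdaptedIndex d) : ℂ :=
  if m < q.1 then y q.1 q.2 else if q.1 = blockPos q.2 then 1 else 0

lemma frame_frameConfig (y : ℕ → AdaptedIndex d → ℂ) (hj : d j ≤ m) :
    frame (blockPoint (frameConfig m y) j) = 1 := by
  ext a k
  have hk : ¬ m < k := by omega
  simp [frame, blockPoint, frameConfig, hk, one_apply, Fin.ext_iff, eq_comm]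

lemma frameCoord_frameConfig (y : ℕ → AdaptedIndex d → ℂ) (hj : d j ≤ m) {i : ℕ} (hi : m < i)
    (k : Fin (d j + 1)) :
    frameCoord (blockPoint (frameConfig m y) j) i k = y i (blockIndex j k) := by
  rw [frameCoord, frame_frameConfig y hj, cramer_one]
  simp [blockPoint, frameConfig, hi]

lemma eventually_frame_det_ne_zero (j : ι) :
    ∀ᶠ x : ℕ × AdaptedIndex d → ℂ in genericFilter _ ℂ, (frame (blockPoint x j)).det ≠ 0 :=
  genericFilter.eventually_ne_zero (frame_det_mem_polyFun j) (x₀ := frameConfig (d j) 0)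
    (by simp [frame_frameConfig])

lemma eventually_frameCoord_ne_zero {i : ℕ} (hi : d j < i) (k : Fin (d j + 1)) :
    ∀ᶠ x : ℕ × AdaptedIndex d → ℂ in genericFilter _ ℂ, frameCoord (blockPoint x j) i k ≠ 0 :=
  genericFilter.eventually_ne_zero (frameCoord_mem_polyFun j i k) (x₀ := frameConfig (d j) 1)
    (by simp [frameCoord_frameConfig 1 le_rfl hi])

lemma eventually_inverseCoordMinor_ne_zero (hj : 2 ≤ d j) :
    ∀ᶠ x : ℕ × AdaptedIndex d → ℂ in genericFilter _ ℂ,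
      inverseCoordMinor (blockPoint x j) (Fin.castLE (by omega)) ≠ 0 := by
  let y (i : ℕ) (o : AdaptedIndex d) : ℂ := 1 + ((i - (d j + 1)) * blockPos o % 3 : ℕ)
  have hval (a b : Fin 3) : ∏ c : Fin 2, frameCoord (blockPoint (frameConfig (d j) y) j)
      (d j + 1 + (a.succAbove c : ℕ)) (Fin.castLE (by omega) b) =
        !![1, 6, 6; 1, 3, 2; 1, 2, 3] a b := by
    rw [Fin.prod_univ_two, frameCoord_frameConfig _ le_rfl (by omega),
      frameCoord_frameConfig _ le_rfl (by omega)]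
    fin_cases a <;> fin_cases b <;> simp [y, Fin.succAbove] <;> norm_num
  refine genericFilter.eventually_ne_zero (f := fun x => inverseCoordMinor (blockPoint x j) _)
    (x₀ := frameConfig (d j) y) (polyFun.det_mem fun a b => ?_) ?_
  · simp only [of_apply]
    exact polyFun.prod_mem fun c _ => frameCoord_mem_polyFun j _ _
  · simp only [inverseCoordMinor, hval, det_fin_three, of_apply, cons_val]
    norm_num

lemma eventually_frameCoord_mul_ne (hj : j₀ ≠ j₁) (h0 : 1 < d j₀ + 1) (h1 : 1 < d j₁ + 1) {a b : ℕ}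
    (ha₀ : d j₀ < a) (ha₁ : d j₁ < a) (hab : a < b) :
    ∀ᶠ x : ℕ × AdaptedIndex d → ℂ in genericFilter _ ℂ,
      frameCoord (blockPoint x j₀) a 0 * frameCoord (blockPoint x j₀) b ⟨1, h0⟩ *
        (frameCoord (blockPoint x j₁) a ⟨1, h1⟩ * frameCoord (blockPoint x j₁) b 0) ≠
      frameCoord (blockPoint x j₀) a ⟨1, h0⟩ * frameCoord (blockPoint x j₀) b 0 *
        (frameCoord (blockPoint x j₁) a 0 * frameCoord (blockPoint x j₁) b ⟨1, h1⟩) := by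
  classical
  simp only [← sub_ne_zero (b := frameCoord _ a ⟨1, h0⟩ * _ * _)]
  have hmem (j i k) := frameCoord_mem_polyFun (d := d) j i k
  refine genericFilter.eventually_ne_zero (f := fun x => _ - _)
    (sub_mem (mul_mem (mul_mem (hmem _ _ _) (hmem _ _ _)) (mul_mem (hmem _ _ _) (hmem _ _ _)))
      (mul_mem (mul_mem (hmem _ _ _) (hmem _ _ _)) (mul_mem (hmem _ _ _) (hmem _ _ _))))
    (x₀ := frameConfig (max (d j₀) (d j₁)) fun i o =>
      o.elim 1 fun q => if q.1 = j₀ ∧ i = a then 0 else 1) ?_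
  have hone (j : ι) (h : 1 < d j + 1) : blockIndex j ⟨1, h⟩ = some ⟨j, ⟨0, by omega⟩⟩ := rfl
  have hzero (j : ι) : blockIndex j (0 : Fin (d j + 1)) = none := rfl
  repeat rw [frameCoord_frameConfig _ (by omega) (by omega)]
  simp [hone, hzero, hj.symm, hab.ne']

lemma eventually_none_ne_zero (N : ℕ) :
    ∀ᶠ x : ℕ × AdaptedIndex d → ℂ in genericFilter _ ℂ, ∀ i < N, x (i, none) ≠ 0 :=
  (eventually_all_finite (Set.finite_lt_nat N)).2 fun i _ =>
    genericFilter.eventually_ne_zero (polyFun.coord_mem (i, none)) (x₀ := 1) one_ne_zero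

variable [Fintype ι]

lemma eventually_exists_isInterpolant (hj : d j ≠ 0) :
    ∀ᶠ x in genericFilter (ℕ × AdaptedIndex d) ℂ,
      (HasAdaptedCurve fun (i : Fin s) o => x (i, o)) →
        ∃ τ, DistinctNodes s τ ∧ ∀ j, ∃ H, IsInterpolant s (blockPoint x j) τ H := by
  let p : AdaptedIndex d := some ⟨j, 0, by omega⟩
  have hp : ∀ᶠ x in genericFilter (ℕ × AdaptedIndex d) ℂ, ∀ i < s, ∀ k < s, i ≠ k →
      x (i, none) * x (k, p) - x (k, none) * x (i, p) ≠ 0 := by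
    refine (eventually_all_finite (Set.finite_lt_nat s)).2 fun i _ =>
      (eventually_all_finite (Set.finite_lt_nat s)).2 fun k _ => eventually_imp_distrib_left.2
        fun hik => genericFilter.eventually_ne_zero
          (f := fun x => x (i, none) * x (k, p) - x (k, none) * x (i, p))
          (sub_mem (mul_mem (polyFun.coord_mem _) (polyFun.coord_mem _))
            (mul_mem (polyFun.coord_mem _) (polyFun.coord_mem _)))
          (x₀ := fun q => q.2.elim 1 fun _ => (q.1 : ℂ)) ?_
    simpa [p, sub_eq_zero] using hik.symm
  filter_upwards [eventually_none_ne_zero s, hp] with x h0 hp hx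
  exact hx.exists_isInterpolant h0 hp

/-- The projections of the curve to `ℙ^(d j₀)` and to `ℙ^(d j₁)` both determine the cross ratio of
the nodes `0`, `1`, `d j₁ + 1`, `d j₁ + 2`. -/
lemma eventually_not_hasAdaptedCurve_of_ne (hj : j₀ ≠ j₁) (h0 : d j₀ ≠ 0) (h01 : d j₀ ≤ d j₁)
    (hs : d j₁ + 3 ≤ s) : ∀ᶠ x in genericFilter (ℕ × AdaptedIndex d) ℂ,
      ¬ HasAdaptedCurve fun (i : Fin s) o => x (i, o) := by
  filter_upwards [eventually_exists_isInterpolant (s := s) h0, eventually_frame_det_ne_zero j₀,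
    eventually_frame_det_ne_zero j₁, eventually_frameCoord_mul_ne hj (by omega) (by omega)
      (by omega : d j₀ < d j₁ + 1) (by omega) (Nat.lt_succ_self _)] with x hx hdet₀ hdet₁ hc hcurve
  obtain ⟨τ, hτ, hH⟩ := hx hcurve
  have hswap (j : ι) (hd : (frame (blockPoint x j)).det ≠ 0) (hj : d j ≤ d j₁) (h : 1 < d j + 1) :=
    (hH j).choose_spec.frameCoord_mul_bracket_swap hτ hd (a := d j₁ + 1) (b := d j₁ + 2) (by omega)
      (by omega) (by omega) (by omega) 0 ⟨1, h⟩
  have hne : bracket (τ (d j₁ + 1)) (τ 0) * bracket (τ (d j₁ + 2)) (τ 1) ≠ 0 :=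
    mul_ne_zero (hτ _ (by omega) _ (by omega) (by omega)) (hτ _ (by omega) _ (by omega) (by omega))
  refine hc (mul_right_cancel₀ hne ?_)
  have h₀ := hswap j₀ hdet₀ h01 (by omega)
  have h₁ := hswap j₁ hdet₁ le_rfl (by omega)
  simp only [Fin.coe_ofNat_eq_mod, Nat.zero_mod] at h₀ h₁
  linear_combination frameCoord (blockPoint x j₁) (d j₁ + 1) ⟨1, _⟩ *
    frameCoord (blockPoint x j₁) (d j₁ + 2) 0 * h₀ -
      frameCoord (blockPoint x j₀) (d j₁ + 1) ⟨1, _⟩ *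
        frameCoord (blockPoint x j₀) (d j₁ + 2) 0 * h₁

lemma eventually_not_hasAdaptedCurve_of_two_le (hj : 2 ≤ d j) (hs : d j + 4 ≤ s) :
    ∀ᶠ x in genericFilter (ℕ × AdaptedIndex d) ℂ,
      ¬ HasAdaptedCurve fun (i : Fin s) o => x (i, o) := by
  filter_upwards [eventually_exists_isInterpolant (s := s) (by omega : d j ≠ 0),
    eventually_frame_det_ne_zero j, eventually_inverseCoordMinor_ne_zero hj]
    with x hx hdet hminor hcurve
  obtain ⟨τ, hτ, hH⟩ := hx hcurve
  obtain ⟨H, hH⟩ := hH j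
  exact hminor (hH.inverseCoordMinor_eq_zero hτ hdet hs _)

end Obstructions

section Sample

open Finset Polynomial

lemma exists_injective_roots {ι K : Type*} [Fintype ι] [Field K] [IsAlgClosed K] {d : ι → ℕ}
    {p : ι → K[X]} (hle : ∀ j, (p j).natDegree ≤ d j) (hdeg : (∏ j, p j).natDegree = ∑ j, d j)
    (hsep : (∏ j, p j).Separable) :
    ∃ z : (Σ j, Fin (d j)) → K, z.Injective ∧ ∀ q, (p q.1).eval (z q) = 0 := by
  classical
  have hne (j : ι) : p j ≠ 0 := prod_ne_zero_iff.1 hsep.ne_zero j (mem_univ j)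
  have hd (j : ι) : (p j).natDegree = d j := by
    rw [natDegree_prod _ _ fun j _ => hne j] at hdeg
    exact (sum_eq_sum_iff_of_le fun j _ => hle j).1 hdeg j (mem_univ j)
  have hcard (j : ι) : (p j).roots.toFinset.card = d j := by
    rw [Multiset.toFinset_card_of_nodup
      (nodup_roots (hsep.of_dvd (dvd_prod_of_mem _ (mem_univ j)))), ← hd]
    exact splits_iff_card_roots.1 (IsAlgClosed.splits _)
  let g (j : ι) := (equivFinOfCardEq (hcard j)).symm
  have hg (j : ι) (k : Fin (d j)) : (p j).eval (g j k : K) = 0 :=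
    ((mem_roots (hne j)).1 (Multiset.mem_toFinset.1 (g j k).2))
  refine ⟨fun q => g q.1 q.2, ?_, fun q => hg q.1 q.2⟩
  rintro ⟨i, k⟩ ⟨j, l⟩ (h : (g i k : K) = g j l)
  rcases eq_or_ne i j with rfl | hij
  · rw [(g i).injective (Subtype.ext h)]
  have hdvd : p i * p j ∣ ∏ j, p j := by
    rw [← mul_prod_erase univ p (mem_univ i)]
    exact mul_dvd_mul_left _ (dvd_prod_of_mem _ (mem_erase.2 ⟨hij.symm, mem_univ j⟩))
  obtain ⟨a, b, hab⟩ := (hsep.of_dvd hdvd).isCoprime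
  have heval := congrArg (eval (g i k : K)) hab
  rw [eval_add, eval_mul, eval_mul, hg, h, hg, mul_zero, mul_zero, add_zero, eval_one] at heval
  exact (zero_ne_one heval).elim

variable {ι : Type*} [Fintype ι] {d : ι → ℕ}

/-- Distinct roots, none of them a natural number, for the first coordinate forms of
`sampleForm`. -/
def sampleRoot (q : Σ j, Fin (d j)) : ℂ := -((Fintype.equivFin _ q : ℕ) + 1)

lemma sampleRoot_injective : (sampleRoot (d := d)).Injective := fun p q h => by
  simpa [sampleRoot, Fin.val_inj] using h

lemma natCast_sub_sampleRoot_ne_zero (i : ℕ) (q : Σ j, Fin (d j)) :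
    (i : ℂ) - sampleRoot q ≠ 0 := by
  rw [sampleRoot, sub_neg_eq_add]
  exact_mod_cast (i + Fintype.equivFin _ q).succ_ne_zero

variable (d) in
/-- Points on the rational normal curve with adapted coordinates `1` and `1 / (t - r)`, where `r`
runs through the values of `sampleRoot`, at the parameters `t = 0, 1, 2, …`. -/
def sampleConfig (q : ℕ × AdaptedIndex d) : ℂ := q.2.elim 1 fun p => ((q.1 : ℂ) - sampleRoot p)⁻¹

/-- The projection to `ℙ^(d j)` of the curve through the points `sampleConfig d`. -/
def sampleForm (j : ι) : Fin (d j + 1) → (Fin 2 → ℂ) → ℂ :=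
  Fin.cons (fun v => ∏ k : Fin (d j), bracket v ![sampleRoot ⟨j, k⟩, 1]) fun t v =>
    v 1 * ∏ k ∈ univ.erase t, bracket v ![sampleRoot (⟨j, k⟩ : Σ j, Fin (d j)), 1]

lemma isInterpolant_sampleForm (N : ℕ) (j : ι) :
    IsInterpolant N (blockPoint (sampleConfig d) j) (fun i => ![i, 1]) (sampleForm j) where
  mem_binaryForm a := by
    cases a using Fin.cases with
    | zero =>
      simpa [sampleForm] using
        binaryForm.prod_bracket_mem univ fun k : Fin (d j) => ![sampleRoot ⟨j, k⟩, 1]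
    | succ t =>
      have h1 : (fun v : Fin 2 → ℂ => v 1) ∈ binaryForm 1 := by
        simpa [bracket] using binaryForm.bracket_mem ![-1, 0]
      have hprod := binaryForm.mul_mem h1
        (binaryForm.prod_bracket_mem (univ.erase t) fun k : Fin (d j) => ![sampleRoot ⟨j, k⟩, 1])
      rwa [card_erase_of_mem (mem_univ t), card_univ, Fintype.card_fin,
        Nat.add_sub_cancel' (Nat.one_le_of_lt t.2)] at hprod
  proportional i _ := by
    refine ⟨∏ k : Fin (d j), ((i : ℂ) - sampleRoot ⟨j, k⟩),
      prod_ne_zero_iff.2 fun k _ => natCast_sub_sampleRoot_ne_zero i _, fun a => ?_⟩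
    cases a using Fin.cases with
    | zero => simp [sampleForm, blockPoint, blockIndex, sampleConfig, bracket]
    | succ t =>
      have hroot := natCast_sub_sampleRoot_ne_zero i (⟨j, t⟩ : Σ j, Fin (d j))
      rw [← mul_prod_erase univ _ (mem_univ t)]
      simp [sampleForm, blockPoint, blockIndex, sampleConfig, bracket, mul_right_comm, hroot]

lemma linearIndependent_sampleForm (j : ι) : LinearIndependent ℂ (sampleForm (d := d) j) := by
  rw [Fintype.linearIndependent_iff]
  intro c hc
  have hsum (v : Fin 2 → ℂ) : c 0 * (∏ k : Fin (d j), bracket v ![sampleRoot ⟨j, k⟩, 1]) +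
      ∑ t, c t.succ *
      (v 1 * ∏ k ∈ univ.erase t, bracket v ![sampleRoot (⟨j, k⟩ : Σ j, Fin (d j)), 1]) = 0 := by
    simpa [Fin.sum_univ_succ, sampleForm] using congrFun hc v
  have hsucc (t : Fin (d j)) : c t.succ = 0 := by
    have hprod (l : Fin (d j)) (hl : l ≠ t) : ∏ k ∈ univ.erase l,
        bracket ![sampleRoot ⟨j, t⟩, 1] ![sampleRoot (⟨j, k⟩ : Σ j, Fin (d j)), 1] = 0 :=
      prod_eq_zero (mem_erase.2 ⟨hl.symm, mem_univ t⟩) (bracket_self _)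
    have h := hsum ![sampleRoot ⟨j, t⟩, 1]
    rw [prod_eq_zero (mem_univ t) (bracket_self _), mul_zero, zero_add,
      sum_eq_single t (fun l _ hl => by rw [hprod l hl, mul_zero, mul_zero]) (by simp)] at h
    refine (mul_eq_zero.1 h).resolve_right (mul_ne_zero one_ne_zero ?_)
    refine prod_ne_zero_iff.2 fun k hk => ?_
    simpa [bracket, sub_eq_zero, sampleRoot_injective.eq_iff] using (ne_of_mem_erase hk).symm
  have h0 := hsum ![0, 1]
  simp only [hsucc, zero_mul, sum_const_zero, add_zero] at h0
  refine Fin.cases ((mul_eq_zero.1 h0).resolve_right (prod_ne_zero_iff.2 fun k _ => ?_)) hsucc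
  simpa [bracket] using natCast_sub_sampleRoot_ne_zero 0 (⟨j, k⟩ : Σ j, Fin (d j))

lemma distinctNodes_natCast (N : ℕ) : DistinctNodes N fun i => ![(i : ℂ), 1] := by
  intro i _ k _ hik
  simpa [bracket, sub_eq_zero] using hik

lemma frame_det_sampleConfig_ne_zero (j : ι) :
    (frame (blockPoint (sampleConfig d) j)).det ≠ 0 :=
  ((isInterpolant_sampleForm _ j).frame_det_ne_zero_iff (distinctNodes_natCast _) le_rfl).2
    (linearIndependent_sampleForm j)

lemma exists_frameCoord_sampleConfig (N : ℕ) (j : ι) (hN : d j + 1 ≤ N) :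
    ∃ θ : Fin (d j + 1) → ℂ, (∀ k, θ k ≠ 0) ∧ ∀ i, d j < i → i < N → ∃ ρ : ℂ, ρ ≠ 0 ∧
      ∀ k : Fin (d j + 1), frameCoord (blockPoint (sampleConfig d) j) i k * (i - k) = ρ * θ k := by
  simpa [bracket] using (isInterpolant_sampleForm N j).exists_frameCoord_mul_bracket
    (distinctNodes_natCast N) (frame_det_sampleConfig_ne_zero j) hN

end Sample

section Existence

open Filter Finset Matrix Polynomial

variable {ι : Type*} [Fintype ι] {d : ι → ℕ} {s : ℕ} {j₀ : ι}

/-- Nodes in `ℙ¹` that depend polynomially on a configuration and specialize, up to scaling, to the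
nodes `0, 1, 2, …` of the curve through the points `sampleConfig d`. -/
structure IsNodeFamily (τ : (ℕ × AdaptedIndex d → ℂ) → ℕ → Fin 2 → ℂ) : Prop where
  mem_polyFun : ∀ i b, (fun x => τ x i b) ∈ polyFun _ ℂ
  sample : ∀ i, ∃ γ : ℂ, γ ≠ 0 ∧ τ (sampleConfig d) i = γ • ![(i : ℂ), 1]

variable {τ : (ℕ × AdaptedIndex d → ℂ) → ℕ → Fin 2 → ℂ}

namespace IsNodeFamily

lemma bracket_mem_polyFun (hτ : IsNodeFamily τ) (i k : ℕ) :
    (fun x => bracket (τ x i) (τ x k)) ∈ polyFun _ ℂ :=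
  sub_mem (mul_mem (hτ.mem_polyFun i 0) (hτ.mem_polyFun k 1))
    (mul_mem (hτ.mem_polyFun i 1) (hτ.mem_polyFun k 0))

lemma distinctNodes_sample (hτ : IsNodeFamily τ) (N : ℕ) :
    DistinctNodes N (τ (sampleConfig d)) :=
  (distinctNodes_natCast N).of_smul hτ.sample

lemma isInterpolant_sample (hτ : IsNodeFamily τ) (N : ℕ) (j : ι) :
    IsInterpolant N (blockPoint (sampleConfig d) j) (τ (sampleConfig d)) (sampleForm j) :=
  (isInterpolant_sampleForm N j).of_smul hτ.sample

lemma eventually_distinctNodes (hτ : IsNodeFamily τ) (N : ℕ) :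
    ∀ᶠ x in genericFilter _ ℂ, DistinctNodes N (τ x) := by
  refine (eventually_all_finite (Set.finite_lt_nat N)).2 fun i hi =>
    (eventually_all_finite (Set.finite_lt_nat N)).2 fun k hk => eventually_all.2 fun hik => ?_
  exact genericFilter.eventually_ne_zero (hτ.bracket_mem_polyFun i k)
    (hτ.distinctNodes_sample N i hi k hk hik)

lemma lagrangePoly_mem_polyFamily (hτ : IsNodeFamily τ) (j : ι) :
    (fun x => lagrangePoly (blockPoint x j) (τ x) (interpWeight (blockPoint x j) (τ x))) ∈
      polyFamily _ ℂ := by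
  have hC (l : ℕ) (b : Fin 2) := polyFamily.C_mem (hτ.mem_polyFun l b)
  refine polyFamily.sum_mem fun k _ => mul_mem (polyFamily.C_mem ?_) ?_
  · exact mul_mem (mul_mem (frameCoord_mem_polyFun j _ k) (hτ.bracket_mem_polyFun _ k))
      (blockPoint_mem_polyFun j k 0)
  · exact polyFamily.prod_mem (s := univ.erase k)
      (f := fun l x => C (τ x l 1) * X - C (τ x l 0)) fun l _ =>
        sub_mem (mul_mem (hC l 1) (polyFamily.const_mem X)) (hC l 0)

lemma exists_lagrangePoly_sample_eq (hτ : IsNodeFamily τ) (j : ι) :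
    ∃ c : ℂ, c ≠ 0 ∧ lagrangePoly (blockPoint (sampleConfig d) j) (τ (sampleConfig d))
      (interpWeight (blockPoint (sampleConfig d) j) (τ (sampleConfig d))) =
        C c * ∏ k : Fin (d j), (X - C (sampleRoot ⟨j, k⟩)) := by
  obtain ⟨c, hc, h⟩ := (hτ.isInterpolant_sample _ j).lagrangeForm_interpWeight_eq_smul
    (hτ.distinctNodes_sample _) (frame_det_sampleConfig_ne_zero j) le_rfl
  refine ⟨c, hc, Polynomial.funext fun t => ?_⟩
  rw [eval_lagrangePoly, h]
  simp [sampleForm, bracket, eval_prod]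

lemma eventually_separable (hτ : IsNodeFamily τ) : ∀ᶠ x in genericFilter _ ℂ,
    (∏ j, lagrangePoly (blockPoint x j) (τ x)
      (interpWeight (blockPoint x j) (τ x))).natDegree = ∑ j, d j ∧
    (∏ j, lagrangePoly (blockPoint x j) (τ x)
      (interpWeight (blockPoint x j) (τ x))).Separable := by
  choose c hc hp using hτ.exists_lagrangePoly_sample_eq
  have hsample : ∏ j, lagrangePoly (blockPoint (sampleConfig d) j) (τ (sampleConfig d))
      (interpWeight (blockPoint (sampleConfig d) j) (τ (sampleConfig d))) =
        C (∏ j, c j) * ∏ q : Σ j, Fin (d j), (X - C (sampleRoot q)) := by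
    simp only [hp, prod_mul_distrib, map_prod, Fintype.prod_sigma]
  have hc' : ∏ j, c j ≠ 0 := prod_ne_zero_iff.2 fun j _ => hc j
  refine genericFilter.eventually_separable
    (polyFamily.prod_mem fun j _ => hτ.lagrangePoly_mem_polyFamily j)
    (fun x => (natDegree_prod_le _ _).trans (sum_le_sum fun j _ => natDegree_lagrangePoly_le))
    (x₀ := sampleConfig d) ?_ ?_
  · rw [hsample, natDegree_C_mul hc', natDegree_prod_of_monic _ _ fun q _ => monic_X_sub_C _]
    simp
  · rw [hsample]
    exact (separable_prod_X_sub_C_iff.2 sampleRoot_injective).unit_mul (isUnit_C.2 hc'.isUnit)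

lemma eventually_isInterpolant (hτ : IsNodeFamily τ) (j : ι) : ∀ᶠ x in genericFilter _ ℂ,
    IsInterpolant (d j + 2) (blockPoint x j) (τ x)
      (lagrangeForm (blockPoint x j) (τ x) (interpWeight (blockPoint x j) (τ x))) := by
  filter_upwards [eventually_frame_det_ne_zero j, hτ.eventually_distinctNodes (d j + 2),
    eventually_all.2 (eventually_frameCoord_ne_zero (Nat.lt_succ_self _))] with x hdet hτx hc
  exact isInterpolant_lagrangeForm_interpWeight hdet hτx hc

lemma eventually_hasAdaptedCurve (hτ : IsNodeFamily τ)
    (h : ∀ j, d j + 2 < s → ∀ᶠ x in genericFilter _ ℂ, IsInterpolant s (blockPoint x j) (τ x)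
      (lagrangeForm (blockPoint x j) (τ x) (interpWeight (blockPoint x j) (τ x)))) :
    ∀ᶠ x in genericFilter (ℕ × AdaptedIndex d) ℂ,
      HasAdaptedCurve fun (i : Fin s) o => x (i, o) := by
  filter_upwards [eventually_none_ne_zero s, hτ.eventually_distinctNodes (s + 2),
    eventually_all.2 fun j => hτ.eventually_distinctNodes (d j + 2),
    eventually_all.2 eventually_frame_det_ne_zero, hτ.eventually_separable,
    eventually_all.2 hτ.eventually_isInterpolant,
    eventually_all.2 fun j => eventually_all.2 (h j)] with x h0 hτs hτd hdet hsep hint hlong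
  obtain ⟨z, hz, hroot⟩ := exists_injective_roots (fun j => natDegree_lagrangePoly_le)
    hsep.1 hsep.2
  refine hasAdaptedCurve_of_isInterpolant (W := fun q => ![z q, 1]) (τ := τ x)
    (fun q hq => one_ne_zero (congrFun hq 1)) (fun q q' hqq' => ?_)
    (fun i hi => hτs.ne_zero (by omega) (by omega)) h0 (fun j => ?_)
    (fun j => ((hint j).frame_det_ne_zero_iff (hτd j) le_rfl).1 (hdet j))
    fun q => (eval_lagrangePoly _).symm.trans (hroot q)
  · simpa [bracket, sub_eq_zero] using hz.ne hqq'
  · exact (le_or_gt s (d j + 2)).elim (hint j).mono (hlong j)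

end IsNodeFamily

lemma eventually_hasAdaptedCurve (hs : ∀ j, s ≤ d j + 2) :
    ∀ᶠ x in genericFilter (ℕ × AdaptedIndex d) ℂ,
      HasAdaptedCurve fun (i : Fin s) o => x (i, o) := by
  have hτ : IsNodeFamily (d := d) fun _ i => ![(i : ℂ), 1] :=
    ⟨fun i b => polyFun.const_mem _, fun i => ⟨1, one_ne_zero, (one_smul ℂ _).symm⟩⟩
  exact hτ.eventually_hasAdaptedCurve fun j hj => absurd (hs j) hj.not_ge

lemma isInterpolant_line {m N : ℕ} {q : ℕ → Fin (m + 1) → ℂ} (hm : m = 1) (t : Fin m) (ρ : ℂ) :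
    IsInterpolant N q (fun i => ![q i 0 + ρ * q i t.succ, q i t.succ])
      (Fin.cons (fun v => v 0 - ρ * v 1) fun _ v => v 1) := by
  subst hm
  refine ⟨fun a => ?_, fun i _ => ⟨1, one_ne_zero, fun a => ?_⟩⟩
  · cases a using Fin.cases with
    | zero => simpa [bracket, mul_comm ρ] using binaryForm.bracket_mem ![ρ, 1]
    | succ t => simpa [bracket] using binaryForm.bracket_mem ![-1, 0]
  · cases a using Fin.cases with
    | zero => simp
    | succ t' => simp [Subsingleton.elim t' t]

/-- If `d j₀ = 1`, the projection to `ℙ^(d j₀)` is an isomorphism onto `ℙ¹`, which determines all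
the nodes. -/
lemma eventually_hasAdaptedCurve_of_eq_one (h₀ : d j₀ = 1) (hs : ∀ j ≠ j₀, s ≤ d j + 2) :
    ∀ᶠ x in genericFilter (ℕ × AdaptedIndex d) ℂ,
      HasAdaptedCurve fun (i : Fin s) o => x (i, o) := by
  let t : Fin (d j₀) := ⟨0, by omega⟩
  let ρ := sampleRoot ⟨j₀, t⟩
  let τ (x : ℕ × AdaptedIndex d → ℂ) (i : ℕ) : Fin 2 → ℂ :=
    ![blockPoint x j₀ i 0 + ρ * blockPoint x j₀ i t.succ, blockPoint x j₀ i t.succ]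
  have hmem (i a) := blockPoint_mem_polyFun (d := d) j₀ i a
  have hτ : IsNodeFamily τ := by
    refine ⟨fun i b => ?_, fun i => ?_⟩
    · fin_cases b
      exacts [add_mem (hmem i 0) (mul_mem (polyFun.const_mem ρ) (hmem i t.succ)), hmem i t.succ]
    · have hi : (i : ℂ) - ρ ≠ 0 := natCast_sub_sampleRoot_ne_zero i _
      have hzero : blockPoint (sampleConfig d) j₀ i 0 = 1 := rfl
      have hsucc : blockPoint (sampleConfig d) j₀ i t.succ = (i - ρ)⁻¹ := rfl
      refine ⟨(i - ρ)⁻¹, inv_ne_zero hi, ?_⟩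
      simp only [τ, hzero, hsucc, smul_vec2, smul_eq_mul, mul_one]
      congr 1
      field_simp
      ring
  refine hτ.eventually_hasAdaptedCurve fun j hj => ?_
  obtain rfl : j = j₀ := by_contra fun h => hj.not_ge (hs j h)
  filter_upwards [hτ.eventually_distinctNodes s, eventually_frame_det_ne_zero j] with x hτx hdet
  exact (isInterpolant_line h₀ t ρ).lagrangeForm_interpWeight hτx hdet hj.le

section CrossNode

variable {m : ℕ} {c e : Fin (m + 1) → ℂ}

variable (c e) in
/-- Nodes in `ℙ¹` of which those of index greater than `m` are the integers and the first `m + 1`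
are chosen to have brackets proportional to `e` with the node `m + 1` and to `c` with the node
`m + 2`. -/
def crossNode (i : ℕ) : Fin 2 → ℂ :=
  if h : i < m + 1 then ![(m + 2) * e ⟨i, h⟩ - (m + 1) * c ⟨i, h⟩, e ⟨i, h⟩ - c ⟨i, h⟩]
  else ![(i : ℂ), 1]

lemma crossNode_fin (k : Fin (m + 1)) :
    crossNode c e k = ![(m + 2) * e k - (m + 1) * c k, e k - c k] :=
  dif_pos k.2

lemma crossNode_of_lt {i : ℕ} (hi : m < i) : crossNode c e i = ![(i : ℂ), 1] :=
  dif_neg (by omega)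

lemma bracket_crossNode_add_one (k : Fin (m + 1)) :
    bracket (crossNode c e (m + 1)) (crossNode c e k) = -e k := by
  rw [crossNode_of_lt (by omega), crossNode_fin]
  simp only [bracket, cons_val_zero, cons_val_one]
  push_cast
  ring

lemma bracket_crossNode_add_two (k : Fin (m + 1)) :
    bracket (crossNode c e (m + 2)) (crossNode c e k) = -c k := by
  rw [crossNode_of_lt (by omega), crossNode_fin]
  simp only [bracket, cons_val_zero, cons_val_one]
  push_cast
  ring

lemma crossNode_mem_polyFun {σ : Type*} {c e : (σ → ℂ) → Fin (m + 1) → ℂ}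
    (hc : ∀ k, (fun x => c x k) ∈ polyFun σ ℂ) (he : ∀ k, (fun x => e x k) ∈ polyFun σ ℂ)
    (i : ℕ) (b : Fin 2) : (fun x => crossNode (c x) (e x) i b) ∈ polyFun σ ℂ := by
  rcases lt_or_ge i (m + 1) with hi | hi
  · simp only [crossNode, dif_pos hi]
    fin_cases b
    · exact sub_mem (mul_mem (polyFun.const_mem _) (he _)) (mul_mem (polyFun.const_mem _) (hc _))
    · exact sub_mem (he _) (hc _)
  · simp only [crossNode_of_lt hi]
    exact polyFun.const_mem _

lemma crossNode_eq_smul {θ : Fin (m + 1) → ℂ} (hθ : ∀ k, θ k ≠ 0)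
    (hc : ∀ k : Fin (m + 1), c k * (m + 1 - k) = θ k)
    (he : ∀ k : Fin (m + 1), e k * (m + 2 - k) = θ k) (i : ℕ) :
    ∃ γ : ℂ, γ ≠ 0 ∧ crossNode c e i = γ • ![(i : ℂ), 1] := by
  rcases lt_or_ge i (m + 1) with hi | hi
  · lift i to Fin (m + 1) using hi with k
    have hp := right_ne_zero_of_mul ((hc k).trans_ne (hθ k))
    have hq := right_ne_zero_of_mul ((he k).trans_ne (hθ k))
    refine ⟨-θ k / ((m + 1 - k) * (m + 2 - k)),
      div_ne_zero (neg_ne_zero.2 (hθ k)) (mul_ne_zero hp hq), ?_⟩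
    rw [crossNode_fin, eq_div_of_mul_eq hp (hc k), eq_div_of_mul_eq hq (he k), smul_vec2]
    congr 2 <;> simp only [smul_eq_mul, mul_one] <;> field_simp <;> ring
  · exact ⟨1, one_ne_zero, by rw [crossNode_of_lt hi, one_smul]⟩

lemma isInterpolant_crossNode {q : ℕ → Fin (m + 1) → ℂ} {u w : ℂ} (hu : u ≠ 0) (hw : w ≠ 0)
    (hc : ∀ k, u * c k = frameCoord q (m + 1) k) (he : ∀ k, w * e k = frameCoord q (m + 2) k)
    (hτ : DistinctNodes (m + 3) (crossNode c e)) (hdet : (frame q).det ≠ 0)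
    (hq : ∀ k, frameCoord q (m + 1) k ≠ 0) :
    IsInterpolant (m + 3) q (crossNode c e)
      (lagrangeForm q (crossNode c e) (interpWeight q (crossNode c e))) := by
  refine (isInterpolant_lagrangeForm_iff hdet hτ (by omega)
    (interpWeight_ne_zero (hτ.mono (by omega)) hq)).2 fun i hi hi3 => ?_
  obtain rfl | rfl : i = m + 1 ∨ i = m + 2 := by omega
  · exact ⟨1, one_ne_zero, fun k => (one_mul _).symm⟩
  · refine ⟨w / u, div_ne_zero hw hu, fun k => ?_⟩
    rw [interpWeight, bracket_crossNode_add_one, bracket_crossNode_add_two, ← hc, ← he]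
    field_simp

end CrossNode

lemma eventually_hasAdaptedCurve_of_le (h₀ : s ≤ d j₀ + 3) (hs : ∀ j ≠ j₀, s ≤ d j + 2) :
    ∀ᶠ x in genericFilter (ℕ × AdaptedIndex d) ℂ,
      HasAdaptedCurve fun (i : Fin s) o => x (i, o) := by
  obtain ⟨θ, hθ, h⟩ := exists_frameCoord_sampleConfig (d := d) (d j₀ + 3) j₀ (by omega)
  obtain ⟨u, hu, hu'⟩ := h (d j₀ + 1) (by omega) (by omega)
  obtain ⟨w, hw, hw'⟩ := h (d j₀ + 2) (by omega) (by omega)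
  push_cast at hu' hw'
  let c (x : ℕ × AdaptedIndex d → ℂ) (k) := u⁻¹ * frameCoord (blockPoint x j₀) (d j₀ + 1) k
  let e (x : ℕ × AdaptedIndex d → ℂ) (k) := w⁻¹ * frameCoord (blockPoint x j₀) (d j₀ + 2) k
  have hc (k) : (fun x => c x k) ∈ polyFun _ ℂ :=
    mul_mem (polyFun.const_mem _) (frameCoord_mem_polyFun j₀ _ k)
  have he (k) : (fun x => e x k) ∈ polyFun _ ℂ :=
    mul_mem (polyFun.const_mem _) (frameCoord_mem_polyFun j₀ _ k)
  have hτ : IsNodeFamily fun x => crossNode (c x) (e x) := by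
    refine ⟨crossNode_mem_polyFun hc he, crossNode_eq_smul hθ (fun k => ?_) fun k => ?_⟩
    · rw [mul_assoc, hu', inv_mul_cancel_left₀ hu]
    · rw [mul_assoc, hw', inv_mul_cancel_left₀ hw]
  refine hτ.eventually_hasAdaptedCurve fun j hj => ?_
  obtain rfl : j = j₀ := by_contra fun h => hj.not_ge (hs j h)
  filter_upwards [hτ.eventually_distinctNodes (d j + 3), eventually_frame_det_ne_zero j,
    eventually_all.2 (eventually_frameCoord_ne_zero (Nat.lt_succ_self _))] with x hτx hdet hq
  exact (isInterpolant_crossNode hu hw (fun k => mul_inv_cancel_left₀ hu _)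
    (fun k => mul_inv_cancel_left₀ hw _) hτx hdet hq).mono h₀

end Existence

/-- Theorem (SEGREteoiff): for a generic configuration of `s` points and `r` linear
subspaces `Λ₁,…,Λ_r` of dimensions `n₁-1,…,n_r-1` in `ℙⁿ`, `n = n₁+⋯+n_r`, there exists
a rational normal curve through the points meeting each `Λⱼ` in exactly `nⱼ` distinct
points if and only if either (`s ≤ n₁+3` and `1 < n₁ < n₂`) or (`s ≤ n₂+2` and
(`n₁ = 1` or `n₁ = n₂`)). -/
theorem segre_feasibility_iff
    (r : ℕ) (hr : 2 ≤ r) (nv : Fin r → ℕ) (hnv : ∀ j, 1 ≤ nv j) (hmono : Monotone nv)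
    (n : ℕ) (hn : n = ∑ j, nv j) (s : ℕ) :
    (GenHoldsPtsSpaces n s r nv fun P B =>
      ∃ C : Set (PP n), IsRNC n C ∧ (∀ i, projSet (P i) ⊆ C) ∧
        ∀ j, (C ∩ projSet (B j)).ncard = nv j) ↔
    ((s ≤ nv ⟨0, by omega⟩ + 3 ∧ 1 < nv ⟨0, by omega⟩ ∧ nv ⟨0, by omega⟩ < nv ⟨1, by omega⟩) ∨
     (s ≤ nv ⟨1, by omega⟩ + 2 ∧ (nv ⟨0, by omega⟩ = 1 ∨ nv ⟨0, by omega⟩ = nv ⟨1, by omega⟩))) := by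
  subst hn
  have hj : (⟨0, by omega⟩ : Fin r) ≠ ⟨1, by omega⟩ := by simp
  have h01 : nv ⟨0, by omega⟩ ≤ nv ⟨1, by omega⟩ := hmono (Fin.mk_le_mk.2 zero_le_one)
  have hle (j : Fin r) (h : j ≠ ⟨0, by omega⟩) : nv ⟨1, by omega⟩ ≤ nv j :=
    hmono (Fin.mk_le_mk.2 (Nat.pos_of_ne_zero fun h0 => h (Fin.ext h0)))
  generalize (⟨0, by omega⟩ : Fin r) = j₀ at *
  generalize (⟨1, by omega⟩ : Fin r) = j₁ at *
  have h0 := hnv j₀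
  have hd : ∑ j, nv j ≠ 0 := fun h =>
    Nat.one_le_iff_ne_zero.1 h0 (Finset.sum_eq_zero_iff.1 h j₀ (Finset.mem_univ j₀))
  refine ⟨fun hgen => ?_, ?_⟩
  · have hs : ¬ nv j₁ + 3 ≤ s := fun hs => not_genHolds_of_eventually hd
      (eventually_not_hasAdaptedCurve_of_ne hj (by omega) h01 hs) hgen
    have hs₀ : 2 ≤ nv j₀ → ¬ nv j₀ + 4 ≤ s := fun h2 hs => not_genHolds_of_eventually hd
      (eventually_not_hasAdaptedCurve_of_two_le h2 hs) hgen
    omega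
  · rintro (⟨hs, -, h⟩ | ⟨hs, h | h⟩) <;> apply genHolds_of_eventually hd
    · exact eventually_hasAdaptedCurve_of_le hs fun j hj => by have := hle j hj; omega
    · exact eventually_hasAdaptedCurve_of_eq_one h fun j hj => by have := hle j hj; omega
    · refine eventually_hasAdaptedCurve fun j => ?_
      rcases eq_or_ne j j₀ with rfl | hj
      · omega
      · have := hle j hj; omega

end
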